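/- arXiv:1206.2233 — 2 statements merged into one kernel-verified Lean document; each statement's English description precedes it below -/
import Mathlib

section
/- Let P be a finitely generated FI-module over ℂ that is a projective object of the category of FI-modules. Then P is injective in the category of finitely generated FI-modules: for every morphism i : X → Y of finitely generated FI-modules such that i_S : X(S) → Y(S) is injective for every finite set S, and every morphism f : X → P, there exists a morphism g : Y → P with g ∘ i = f. -/
open CategoryTheory

structure FIObj where
  α : Type
  fin : Fintype α

instance (S : FIObj) : Fintype S.α := S.fin

def FIObj.of (α : Type) [Fintype α] : FIObj := ⟨α, inferInstance⟩

instance : Category FIObj where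
  Hom S T := {f : S.α → T.α // Function.Injective f}
  id S := ⟨id, Function.injective_id⟩
  comp f g := ⟨g.1 ∘ f.1, g.2.comp f.2⟩

/-- FI-modules over ℂ: functors from FI to ℂ-vector spaces. -/
abbrev FIMod := FIObj ⥤ ModuleCat.{0} ℂ

/-- A sub-FI-module. -/
structure FISub (M : FIMod) where
  carrier : ∀ S : FIObj, Submodule ℂ (M.obj S)
  map_mem : ∀ {S T : FIObj} (f : S ⟶ T) (x : M.obj S), x ∈ carrier S → M.map f x ∈ carrier T

/-- A finitely generated FI-module. -/
def FIMod.FG (M : FIMod) : Prop :=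
  ∃ (k : ℕ) (S : Fin k → FIObj) (m : ∀ i, M.obj (S i)),
    ∀ N : FISub M, (∀ i, m i ∈ N.carrier (S i)) → ∀ T, N.carrier T = ⊤

namespace FIaux

abbrev c (n : ℕ) : FIObj := FIObj.of (Fin n)

def mk {S T : FIObj} (f : S.α → T.α) (h : Function.Injective f) : S ⟶ T := ⟨f, h⟩

lemma hom_ext {S T : FIObj} (f g : S ⟶ T) (h : ∀ x, f.1 x = g.1 x) : f = g :=
  Subtype.ext (funext h)

lemma comp_val {S T U : FIObj} (f : S ⟶ T) (g : T ⟶ U) (x : S.α) : (f ≫ g).1 x = g.1 (f.1 x) := rfl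

lemma map_map (X : FIMod) {S T U : FIObj} (f : S ⟶ T) (g : T ⟶ U) (x : X.obj S) :
    X.map g (X.map f x) = X.map (f ≫ g) x := by
  simp

def toHom {N : ℕ} (g : Equiv.Perm (Fin N)) : c N ⟶ c N := ⟨g, g.injective⟩

def cast {n N : ℕ} (h : n ≤ N) : c n ⟶ c N := ⟨Fin.castLE h, Fin.castLE_injective h⟩

lemma exists_perm_aux {α β : Type} [Fintype β] (f g : α → β) (hf : Function.Injective f)
    (hg : Function.Injective g) : ∃ p : Equiv.Perm β, ∀ x, f x = p (g x) := by
  classical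
  let e : {x : β // x ∈ Set.range g} ≃ {x : β // x ∈ Set.range f} :=
    (Equiv.ofInjective g hg).symm.trans (Equiv.ofInjective f hf)
  refine ⟨e.extendSubtype, fun x => ?_⟩
  rw [e.extendSubtype_apply_of_mem (g x) ⟨x, rfl⟩]
  simp only [e, Equiv.trans_apply]
  rw [Equiv.ofInjective_symm_apply hg x]
  rfl

lemma exists_perm {n N : ℕ} (f g : c n ⟶ c N) : ∃ p : Equiv.Perm (Fin N), f = g ≫ toHom p := by
  obtain ⟨p, hp⟩ := exists_perm_aux (α := Fin n) (β := Fin N) f.1 g.1 f.2 g.2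
  exact ⟨p, hom_ext _ _ hp⟩

noncomputable def avg (X : FIMod) (N n : ℕ) : X.obj (c n) →ₗ[ℂ] X.obj (c N) :=
  if h : n ≤ N then ∑ g : Equiv.Perm (Fin N), (X.map (cast h ≫ toHom g)).hom else 0

lemma avg_apply (X : FIMod) {N n : ℕ} (h : n ≤ N) (x : X.obj (c n)) :
    avg X N n x = ∑ g : Equiv.Perm (Fin N), X.map (cast h ≫ toHom g) x := by
  simp only [avg, dif_pos h, LinearMap.sum_apply]

lemma avg_map (X : FIMod) {N n m : ℕ} (hn : n ≤ N) (hm : m ≤ N) (φ : c n ⟶ c m)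
    (x : X.obj (c n)) : avg X N m (X.map φ x) = avg X N n x := by
  rw [avg_apply X hn, avg_apply X hm]
  obtain ⟨p, hp⟩ := exists_perm (φ ≫ cast hm) (cast hn)
  refine Fintype.sum_equiv (Equiv.mulRight p) _ _ fun g => ?_
  rw [map_map, ← Category.assoc, hp, Category.assoc]
  rfl

lemma avg_nat {X Y : FIMod} (i : X ⟶ Y) (N n : ℕ) (x : X.obj (c n)) :
    avg Y N n (i.app _ x) = i.app _ (avg X N n x) := by
  by_cases h : n ≤ N
  · rw [avg_apply _ h, avg_apply _ h, map_sum]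
    refine Finset.sum_congr rfl fun g _ => ?_
    exact (NatTrans.naturality_apply i _ x).symm
  · simp [avg, dif_neg h]

abbrev B (X : FIMod) := DirectSum ℕ fun n => X.obj (c n)

noncomputable def E (X : FIMod) (N : ℕ) : B X →ₗ[ℂ] X.obj (c N) :=
  DirectSum.toModule ℂ ℕ _ fun n => avg X N n

noncomputable def ι (X : FIMod) (n : ℕ) : X.obj (c n) →ₗ[ℂ] B X :=
  DirectSum.lof ℂ ℕ (fun n => X.obj (c n)) n

lemma E_ι (X : FIMod) (N n : ℕ) (x : X.obj (c n)) : E X N (ι X n x) = avg X N n x := by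
  simp [E, ι]

noncomputable def I {X Y : FIMod} (i : X ⟶ Y) : B X →ₗ[ℂ] B Y :=
  DirectSum.toModule ℂ ℕ _ fun n => ι Y n ∘ₗ (i.app (c n)).hom

lemma I_ι {X Y : FIMod} (i : X ⟶ Y) (n : ℕ) (x : X.obj (c n)) :
    I i (ι X n x) = ι Y n (i.app _ x) := by
  simp [I, ι]

lemma B_ind (X : FIMod) {p : B X → Prop} (h0 : p 0) (h1 : ∀ n x, p (ι X n x))
    (h2 : ∀ a b, p a → p b → p (a + b)) (w : B X) : p w :=
  DirectSum.induction_on w h0 h1 h2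

lemma E_I {X Y : FIMod} (i : X ⟶ Y) (N : ℕ) (w : B X) :
    E Y N (I i w) = i.app _ (E X N w) := by
  induction w using B_ind X with
  | h0 => simp
  | h1 n x => rw [I_ι, E_ι, E_ι, avg_nat]
  | h2 a b ha hb => simp only [map_add, ha, hb]

def K (Y : FIMod) : Submodule ℂ (B Y) :=
  Submodule.span ℂ {z | ∃ (n m : ℕ) (φ : c n ⟶ c m) (y : Y.obj (c n)),
    z = ι Y m (Y.map φ y) - ι Y n y}

lemma K_E (Y : FIMod) (z : B Y) (hz : z ∈ K Y) : ∃ N0, ∀ N ≥ N0, E Y N z = 0 := by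
  induction hz using Submodule.span_induction with
  | mem z h =>
    obtain ⟨n, m, φ, y, rfl⟩ := h
    refine ⟨max n m, fun N hN => ?_⟩
    rw [map_sub, E_ι, E_ι, avg_map Y (le_trans (le_max_left _ _) hN)
      (le_trans (le_max_right _ _) hN), sub_self]
  | zero => exact ⟨0, fun N _ => map_zero _⟩
  | add a b _ _ ha hb =>
    obtain ⟨p, hp⟩ := ha
    obtain ⟨q, hq⟩ := hb
    refine ⟨max p q, fun N hN => ?_⟩
    rw [map_add, hp N (le_trans (le_max_left _ _) hN), hq N (le_trans (le_max_right _ _) hN),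
      add_zero]
  | smul a x _ hx =>
    obtain ⟨p, hp⟩ := hx
    exact ⟨p, fun N hN => by rw [map_smul, hp N hN, smul_zero]⟩

lemma ext_const {X Y : FIMod} (i : X ⟶ Y) (hi : ∀ S : FIObj, Function.Injective (i.app S))
    (l : ∀ S : FIObj, X.obj S →ₗ[ℂ] ℂ)
    (hl : ∀ (S T : FIObj) (φ : S ⟶ T) (x : X.obj S), l T (X.map φ x) = l S x) :
    ∃ μ : ∀ S : FIObj, Y.obj S →ₗ[ℂ] ℂ,
      (∀ (S T : FIObj) (φ : S ⟶ T) (y : Y.obj S), μ T (Y.map φ y) = μ S y) ∧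
      ∀ (S : FIObj) (x : X.obj S), μ S (i.app S x) = l S x := by
  classical
  let L : B X →ₗ[ℂ] ℂ := DirectSum.toModule ℂ ℕ _ fun n => l (c n)
  have hLι : ∀ n x, L (ι X n x) = l (c n) x := fun n x => by simp [L, ι]
  have hL : ∀ w : B X, ∃ N0, ∀ N ≥ N0,
      l (c N) (E X N w) = (Fintype.card (Equiv.Perm (Fin N)) : ℂ) * L w := by
    intro w
    induction w using B_ind X with
    | h0 => exact ⟨0, fun N _ => by simp⟩
    | h1 n x =>
      refine ⟨n, fun N hN => ?_⟩
      rw [E_ι, avg_apply X hN, map_sum, hLι, Finset.sum_congr rfl (fun g _ => hl _ _ _ x)]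
      rw [Finset.sum_const, nsmul_eq_mul, Finset.card_univ]
    | h2 a b ha hb =>
      obtain ⟨p, hp⟩ := ha
      obtain ⟨q, hq⟩ := hb
      refine ⟨max p q, fun N hN => ?_⟩
      rw [map_add, map_add, hp N (le_trans (le_max_left _ _) hN),
        hq N (le_trans (le_max_right _ _) hN), map_add, mul_add]
  have key : ∀ w : B X, I i w ∈ K Y → L w = 0 := by
    intro w hw
    obtain ⟨p, hp⟩ := K_E Y _ hw
    obtain ⟨q, hq⟩ := hL w
    have h1 := hp (max p q) (le_max_left _ _)
    have h2 := hq (max p q) (le_max_right _ _)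
    rw [E_I] at h1
    have h3 : E X (max p q) w = 0 := hi _ (by rw [h1, map_zero])
    rw [h3, map_zero] at h2
    have h4 : (Fintype.card (Equiv.Perm (Fin (max p q))) : ℂ) ≠ 0 :=
      Nat.cast_ne_zero.mpr Fintype.card_ne_zero
    exact (mul_eq_zero.mp h2.symm).resolve_left h4
  have : L ∈ LinearMap.range ((K Y).mkQ ∘ₗ I i).dualMap := by
    rw [LinearMap.range_dualMap_eq_dualAnnihilator_ker, Submodule.mem_dualAnnihilator]
    intro w hw
    apply key
    simpa using hw
  obtain ⟨M', hM'⟩ := this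
  let M : B Y →ₗ[ℂ] ℂ := M' ∘ₗ (K Y).mkQ
  have hM : ∀ w, M (I i w) = L w := fun w => LinearMap.congr_fun hM' w
  have hMK : ∀ (n m : ℕ) (φ : c n ⟶ c m) (y : Y.obj (c n)),
      M (ι Y m (Y.map φ y)) = M (ι Y n y) := by
    intro n m φ y
    rw [← sub_eq_zero, ← map_sub]
    have : (K Y).mkQ (ι Y m (Y.map φ y) - ι Y n y) = 0 := by
      rw [Submodule.mkQ_apply, Submodule.Quotient.mk_eq_zero]
      exact Submodule.subset_span ⟨n, m, φ, y, rfl⟩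
    change M' _ = 0
    rw [this, map_zero]
  let a : ∀ S : FIObj, S ⟶ c (Fintype.card S.α) := fun S =>
    ⟨Fintype.equivFin S.α, (Fintype.equivFin S.α).injective⟩
  let b : ∀ S : FIObj, c (Fintype.card S.α) ⟶ S := fun S =>
    ⟨(Fintype.equivFin S.α).symm, (Fintype.equivFin S.α).symm.injective⟩
  have hab : ∀ S, a S ≫ b S = 𝟙 S := fun S =>
    hom_ext _ _ fun x => (Fintype.equivFin S.α).symm_apply_apply x
  refine ⟨fun S => M ∘ₗ ι Y _ ∘ₗ (Y.map (a S)).hom, ?_, ?_⟩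
  · intro S T φ y
    change M (ι Y _ (Y.map (a T) (Y.map φ y))) = M (ι Y _ (Y.map (a S) y))
    rw [← hMK _ _ (b S ≫ φ ≫ a T), map_map, map_map, ← Category.assoc (a S), hab,
      Category.id_comp]
  · intro S x
    change M (ι Y _ (Y.map (a S) (i.app S x))) = _
    rw [← NatTrans.naturality_apply i (a S) x, ← I_ι, hM, hLι, hl]

/-- Finite sum of principal projectives. -/
noncomputable def F {k : ℕ} (D : Fin k → FIObj) : FIMod where
  obj T := ModuleCat.of ℂ ((Σ j, (D j ⟶ T)) →₀ ℂ)
  map φ := ModuleCat.ofHom (Finsupp.lmapDomain ℂ ℂ fun e => ⟨e.1, e.2 ≫ φ⟩)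
  map_id T := by
    refine ModuleCat.hom_ext (LinearMap.ext fun v => ?_)
    exact Finsupp.mapDomain_id
  map_comp f g := by
    refine ModuleCat.hom_ext (LinearMap.ext fun v => ?_)
    exact Finsupp.mapDomain_comp (v := v) (f := fun e : Σ j, (D j ⟶ _) => (⟨e.1, e.2 ≫ f⟩ : Σ j, (D j ⟶ _)))
      (g := fun e => (⟨e.1, e.2 ≫ g⟩ : Σ j, (D j ⟶ _)))

def coe {k : ℕ} {D : Fin k → FIObj} {T : FIObj} (v : (F D).obj T) : (Σ j, (D j ⟶ T)) →₀ ℂ := v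

def push {k : ℕ} (D : Fin k → FIObj) {S T : FIObj} (φ : S ⟶ T) (e : Σ j, (D j ⟶ S)) :
    Σ j, (D j ⟶ T) := ⟨e.1, e.2 ≫ φ⟩

lemma push_inj {k : ℕ} (D : Fin k → FIObj) {S T : FIObj} (φ : S ⟶ T) :
    Function.Injective (push D φ) := by
  rintro ⟨j, e⟩ ⟨j', e'⟩ h
  simp only [push, Sigma.mk.injEq] at h
  obtain ⟨rfl, h⟩ := h
  congr 1
  refine hom_ext _ _ fun x => φ.2 ?_
  exact congrFun (congrArg Subtype.val (eq_of_heq h)) x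

lemma F_map {k : ℕ} {D : Fin k → FIObj} {S T : FIObj} (φ : S ⟶ T) (v : (F D).obj S) :
    coe ((F D).map φ v) = Finsupp.mapDomain (push D φ) (coe v) := rfl

lemma F_map_apply {k : ℕ} {D : Fin k → FIObj} {S T : FIObj} (φ : S ⟶ T) (v : (F D).obj S)
    (j : Fin k) (e : D j ⟶ S) : coe ((F D).map φ v) ⟨j, e ≫ φ⟩ = coe v ⟨j, e⟩ := by
  rw [F_map]
  exact Finsupp.mapDomain_apply (push_inj D φ) (coe v) ⟨j, e⟩

lemma F_map_apply_zero {k : ℕ} {D : Fin k → FIObj} {S T : FIObj} (φ : S ⟶ T) (v : (F D).obj S)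
    (j : Fin k) (e : D j ⟶ T) (a : (D j).α) (ha : ∀ s, φ.1 s ≠ e.1 a) :
    coe ((F D).map φ v) ⟨j, e⟩ = 0 := by
  rw [F_map]
  apply Finsupp.mapDomain_of_notMem_range
  rintro ⟨⟨j', e'⟩, h⟩
  simp only [push, Sigma.mk.injEq] at h
  obtain ⟨rfl, h⟩ := h
  have h := eq_of_heq h
  subst h
  exact ha _ rfl

abbrev plus (D S : FIObj) : FIObj := FIObj.of (D.α ⊕ S.α)

def plusMap (D : FIObj) {S T : FIObj} (φ : S ⟶ T) : plus D S ⟶ plus D T :=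
  ⟨Sum.map id φ.1, Sum.map_injective.mpr ⟨Function.injective_id, φ.2⟩⟩

def inl (D S : FIObj) : D ⟶ plus D S := ⟨Sum.inl, Sum.inl_injective⟩

/-- The shift by `D`. -/
def shift (D : FIObj) (X : FIMod) : FIMod where
  obj S := X.obj (plus D S)
  map φ := X.map (plusMap D φ)
  map_id S := by
    have : plusMap D (𝟙 S) = 𝟙 _ := hom_ext _ _ fun x => by rcases x with x | x <;> rfl
    rw [this, X.map_id]
  map_comp f g := by
    have : plusMap D (f ≫ g) = plusMap D f ≫ plusMap D g :=
      hom_ext _ _ fun x => by rcases x with x | x <;> rfl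
    rw [this, X.map_comp]

def shiftMap (D : FIObj) {X Y : FIMod} (i : X ⟶ Y) : shift D X ⟶ shift D Y where
  app S := i.app (plus D S)
  naturality _ _ φ := i.naturality (plusMap D φ)

open Classical in
noncomputable def epsFun {D T : FIObj} (e : D ⟶ T) (A : Finset D.α) (t : T.α) : D.α ⊕ T.α :=
  if h : ∃ a, a ∉ A ∧ e.1 a = t then Sum.inl h.choose else Sum.inr t

lemma epsFun_mem {D T : FIObj} (e : D ⟶ T) (A : Finset D.α) (a : D.α) (h : a ∉ A) :
    epsFun e A (e.1 a) = Sum.inl a := by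
  have h' : ∃ b, b ∉ A ∧ e.1 b = e.1 a := ⟨a, h, rfl⟩
  rw [epsFun, dif_pos h', e.2 h'.choose_spec.2]

lemma epsFun_not {D T : FIObj} (e : D ⟶ T) (A : Finset D.α) (t : T.α)
    (h : ∀ a, a ∉ A → e.1 a ≠ t) : epsFun e A t = Sum.inr t := by
  rw [epsFun, dif_neg]
  rintro ⟨a, h1, h2⟩
  exact h a h1 h2

lemma epsFun_cases {D T : FIObj} (e : D ⟶ T) (A : Finset D.α) (t : T.α) :
    (∃ a, a ∉ A ∧ e.1 a = t ∧ epsFun e A t = Sum.inl a) ∨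
    ((∀ a, a ∉ A → e.1 a ≠ t) ∧ epsFun e A t = Sum.inr t) := by
  by_cases h : ∃ a, a ∉ A ∧ e.1 a = t
  · obtain ⟨a, h1, rfl⟩ := h
    exact Or.inl ⟨a, h1, rfl, epsFun_mem e A a h1⟩
  · push Not at h
    exact Or.inr ⟨h, epsFun_not e A t h⟩

noncomputable def eps {D T : FIObj} (e : D ⟶ T) (A : Finset D.α) : T ⟶ plus D T :=
  ⟨epsFun e A, by
    intro s t h
    rcases epsFun_cases e A s with ⟨a, _, h2, h3⟩ | ⟨_, h3⟩ <;>
    rcases epsFun_cases e A t with ⟨b, _, h5, h6⟩ | ⟨_, h6⟩ <;>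
    rw [h3, h6] at h
    · rw [← h2, ← h5, Sum.inl_injective h]
    · cases h
    · cases h
    · exact Sum.inr_injective h⟩

lemma eps_comp {D S T : FIObj} (e : D ⟶ S) (φ : S ⟶ T) (A : Finset D.α) :
    φ ≫ eps (e ≫ φ) A = eps e A ≫ plusMap D φ := by
  refine hom_ext _ _ fun s => ?_
  change epsFun (e ≫ φ) A (φ.1 s) = Sum.map id φ.1 (epsFun e A s)
  rcases epsFun_cases e A s with ⟨a, h1, rfl, h3⟩ | ⟨h2, h3⟩
  · rw [h3]; exact epsFun_mem (e ≫ φ) A a h1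
  · rw [h3, epsFun_not]; · rfl
    intro a ha h
    exact h2 a ha (φ.2 h)

lemma eps_congr {D S T : FIObj} (e : D ⟶ T) (φ : S ⟶ T) (A A' : Finset D.α) (a : D.α)
    (ha : ∀ s, φ.1 s ≠ e.1 a) (h : ∀ b, b ≠ a → (b ∈ A ↔ b ∈ A')) :
    φ ≫ eps e A = φ ≫ eps e A' := by
  refine hom_ext _ _ fun s => ?_
  change epsFun e A (φ.1 s) = epsFun e A' (φ.1 s)
  rcases epsFun_cases e A (φ.1 s) with ⟨b, h1, h2, h3⟩ | ⟨h2, h3⟩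
  · have hb : b ≠ a := by rintro rfl; exact ha s h2.symm
    rw [h3, ← h2, epsFun_mem]
    rwa [← h b hb]
  · rw [h3, epsFun_not]
    intro b hb hbs
    have hba : b ≠ a := by rintro rfl; exact ha s hbs.symm
    exact h2 b (by rwa [h b hba]) hbs

lemma eps_empty {D T : FIObj} (e : D ⟶ T) : e ≫ eps e ∅ = inl D T :=
  hom_ext _ _ fun a => epsFun_mem e ∅ a (by simp)

lemma eps_miss {D T : FIObj} (e : D ⟶ T) (A : Finset D.α) (a : D.α) (ha : a ∈ A) (t : T.α) :
    (eps e A).1 t ≠ (inl D T).1 a := by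
  change epsFun e A t ≠ Sum.inl a
  rcases epsFun_cases e A t with ⟨b, h1, h2, h3⟩ | ⟨h2, h3⟩
  · rw [h3]; intro h; rw [Sum.inl_injective h] at h1; exact h1 ha
  · rw [h3]; simp

lemma F_inj {k : ℕ} (D : Fin k → FIObj) {X Y : FIMod} (i : X ⟶ Y)
    (hi : ∀ S : FIObj, Function.Injective (i.app S)) (f : X ⟶ F D) :
    ∃ g : Y ⟶ F D, i ≫ g = f := by
  classical
  have hex : ∀ j : Fin k, ∃ μ : ∀ S : FIObj, Y.obj (plus (D j) S) →ₗ[ℂ] ℂ,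
      (∀ (S T : FIObj) (φ : S ⟶ T) (y : Y.obj (plus (D j) S)),
        μ T (Y.map (plusMap (D j) φ) y) = μ S y) ∧
      ∀ (S : FIObj) (x : X.obj (plus (D j) S)),
        μ S (i.app _ x) = coe (f.app _ x) ⟨j, inl (D j) S⟩ := by
    intro j
    let l : ∀ S : FIObj, X.obj (plus (D j) S) →ₗ[ℂ] ℂ := fun S =>
      (show (F D).obj (plus (D j) S) →ₗ[ℂ] ℂ from
        Finsupp.lapply (⟨j, inl (D j) S⟩ : Σ j', (D j' ⟶ plus (D j) S))) ∘ₗ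
        (f.app (plus (D j) S)).hom
    refine ext_const (shiftMap (D j) i) (fun S => hi _) l ?_
    intro S T φ x
    change coe (f.app _ (X.map (plusMap (D j) φ) x)) _ = coe (f.app _ x) _
    rw [NatTrans.naturality_apply f (plusMap (D j) φ) x]
    exact F_map_apply (plusMap (D j) φ) (f.app _ x) j (inl (D j) S)
  choose μ hμ1 hμ2 using hex
  have fin : ∀ T : FIObj, Finite (Σ j, (D j ⟶ T)) := fun T => by
    have : ∀ j, Finite (D j ⟶ T) := fun j =>
      inferInstanceAs (Finite {f : (D j).α → T.α // Function.Injective f})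
    infer_instance
  let h : ∀ (T : FIObj) (e : Σ j, (D j ⟶ T)), Y.obj T →ₗ[ℂ] ℂ := fun T e =>
    ∑ A : Finset (D e.1).α, ((-1 : ℂ) ^ A.card) • (μ e.1 T ∘ₗ (Y.map (eps e.2 A)).hom)
  have h_apply : ∀ T j (e : D j ⟶ T) y, h T ⟨j, e⟩ y =
      ∑ A : Finset (D j).α, ((-1 : ℂ) ^ A.card) * μ j T (Y.map (eps e A) y) := by
    intro T j e y
    simp [h, LinearMap.sum_apply]
  let G : ∀ T : FIObj, Y.obj T →ₗ[ℂ] ((Σ j, (D j ⟶ T)) →₀ ℂ) := fun T =>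
    (Finsupp.linearEquivFunOnFinite ℂ ℂ (Σ j, (D j ⟶ T))).symm.toLinearMap ∘ₗ
      LinearMap.pi (h T)
  have hG : ∀ T y e, G T y e = h T e y := fun T y e => rfl
  refine ⟨{ app := fun T => ModuleCat.ofHom (G T), naturality := ?_ }, ?_⟩
  · intro S T φ
    ext y : 2
    change coe (G T (Y.map φ y)) = coe ((F D).map φ (G S y))
    ext ⟨j, e⟩
    change G T (Y.map φ y) _ = _
    rw [hG, h_apply]
    simp only [map_map]
    by_cases hr : ∀ a, ∃ s, φ.1 s = e.1 a
    · choose e' he' using hr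
      have he'i : Function.Injective e' := fun a b hab => e.2 (by rw [← he', ← he', hab])
      obtain rfl : (⟨e', he'i⟩ : D j ⟶ S) ≫ φ = e := hom_ext _ _ he'
      rw [F_map_apply φ (G S y) j]
      change _ = G S y _
      rw [hG, h_apply]
      refine Finset.sum_congr rfl fun A _ => ?_
      rw [eps_comp, ← map_map, hμ1]
    · push Not at hr
      obtain ⟨a, ha⟩ := hr
      rw [F_map_apply_zero φ (G S y) j e a ha]
      refine Finset.sum_involution (fun A _ => if a ∈ A then A.erase a else insert a A)
        ?_ ?_ ?_ ?_
      · intro A _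
        rw [eps_congr e φ (if a ∈ A then A.erase a else insert a A) A a ha, ← add_mul]
        · split_ifs with hA
          · rw [← Finset.card_erase_add_one hA, pow_succ]; ring
          · rw [Finset.card_insert_of_notMem hA, pow_succ]; ring
        · intro b hb
          split_ifs <;> simp [hb]
      · intro A _ _
        split_ifs with hA
        · intro h; rw [← h] at hA; simp at hA
        · intro h; exact hA (h ▸ Finset.mem_insert_self a A)
      · intro A _; exact Finset.mem_univ _
      · intro A _
        by_cases hA : a ∈ A
        · simp [hA]
        · simp [hA]
  · ext T x : 4
    change coe (G T (i.app T x)) = coe (f.app T x)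
    ext ⟨j, e⟩
    change G T (i.app T x) _ = _
    rw [hG, h_apply]
    rw [Finset.sum_eq_single ∅]
    · rw [← NatTrans.naturality_apply i (eps e ∅) x, hμ2, NatTrans.naturality_apply f (eps e ∅) x,
        ← eps_empty e, F_map_apply]
      simp
    · intro A _ hA
      obtain ⟨a, ha⟩ := Finset.nonempty_iff_ne_empty.mpr hA
      rw [← NatTrans.naturality_apply i (eps e A) x, hμ2, NatTrans.naturality_apply f (eps e A) x,
        F_map_apply_zero _ _ _ _ a (eps_miss e A a ha), mul_zero]
    · simp

noncomputable def toP {k : ℕ} (D : Fin k → FIObj) (P : FIMod) (m : ∀ j, P.obj (D j)) : F D ⟶ P where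
  app T := ModuleCat.ofHom (Finsupp.linearCombination ℂ fun e : Σ j, (D j ⟶ T) => P.map e.2 (m e.1))
  naturality S T φ := by
    ext v : 2
    change Finsupp.linearCombination ℂ (fun e : Σ j, (D j ⟶ T) => P.map e.2 (m e.1))
      (Finsupp.mapDomain (push D φ) (coe v)) = P.map φ (Finsupp.linearCombination ℂ
        (fun e : Σ j, (D j ⟶ S) => P.map e.2 (m e.1)) (coe v))
    rw [Finsupp.linearCombination_mapDomain]
    generalize coe v = v
    induction v using Finsupp.induction_linear with
    | zero => simp
    | add a b ha hb => simp only [map_add, ha, hb]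
    | single e r => simp [push]; rfl

lemma toP_surj {k : ℕ} (D : Fin k → FIObj) (P : FIMod) (m : ∀ j, P.obj (D j))
    (hm : ∀ N : FISub P, (∀ i, m i ∈ N.carrier (D i)) → ∀ T, N.carrier T = ⊤) (T : FIObj) :
    Function.Surjective ((toP D P m).app T) := by
  have := hm ⟨fun T => LinearMap.range ((toP D P m).app T).hom, ?_⟩ ?_ T
  · exact LinearMap.range_eq_top.mp this
  · rintro S T f x ⟨v, rfl⟩
    exact ⟨(F D).map f v, NatTrans.naturality_apply (toP D P m) f v⟩
  · intro j
    refine ⟨Finsupp.single (⟨j, 𝟙 _⟩ : Σ j', (D j' ⟶ D j)) 1, ?_⟩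
    change Finsupp.linearCombination ℂ (fun e : Σ j', (D j' ⟶ D j) => P.map e.2 (m e.1)) _ = _
    simp

end FIaux

/-- A finitely generated FI-module over ℂ that is a projective object of
the category of FI-modules is injective in the category of finitely generated FI-modules. -/
theorem projective_fg_FIMod_is_injective_in_fg
    (P : FIMod) (hfg : FIMod.FG P) (hproj : Projective P) :
    ∀ (X Y : FIMod), FIMod.FG X → FIMod.FG Y →
      ∀ (i : X ⟶ Y), (∀ S : FIObj, Function.Injective (i.app S)) →
        ∀ f : X ⟶ P, ∃ g : Y ⟶ P, i ≫ g = f := by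
  intro X Y _ _ i hi f
  obtain ⟨k, D, m, hm⟩ := hfg
  have hepi : Epi (FIaux.toP D P m) := by
    have : ∀ T, Epi ((FIaux.toP D P m).app T) := fun T =>
      (ModuleCat.epi_iff_surjective _).mpr (FIaux.toP_surj D P m hm T)
    exact NatTrans.epi_of_epi_app _
  obtain ⟨g, hg⟩ := FIaux.F_inj D i hi (f ≫ Projective.factorThru (𝟙 P) (FIaux.toP D P m))
  refine ⟨g ≫ FIaux.toP D P m, ?_⟩
  rw [← Category.assoc, hg, Category.assoc, Projective.factorThru_comp, Category.comp_id]
end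

section
/- Every finitely generated FI-module M over ℂ admits a finite resolution by finitely generated injectives: there is an exact sequence 0 → M → I^0 → I^1 → ⋯ → I^n → 0 of FI-modules (exactness meaning exactness of the sequence of vector spaces at every finite set) in which each I^j is finitely generated and is injective in the category of finitely generated FI-modules (i.e. for every morphism i : X → Y of finitely generated FI-modules with each i_S injective and every morphism f : X → I^j there exists g : Y → I^j with g ∘ i = f). -/
open CategoryTheory

/-- Injectivity in the category of finitely generated FI-modules. -/
def InjectiveInFG (I : FIMod) : Prop :=
  ∀ (X Y : FIMod), FIMod.FG X → FIMod.FG Y →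
    ∀ (i : X ⟶ Y), (∀ S : FIObj, Function.Injective (i.app S)) →
      ∀ f : X ⟶ I, ∃ g : Y ⟶ I, i ≫ g = f

namespace FIR

def mkMod (V : FIObj → Type) [∀ S, AddCommGroup (V S)] [∀ S, Module ℂ (V S)]
    (mp : ∀ {S T : FIObj}, (S ⟶ T) → V S →ₗ[ℂ] V T)
    (hid : ∀ S x, mp (𝟙 S) x = x)
    (hcomp : ∀ {S T U : FIObj} (f : S ⟶ T) (g : T ⟶ U) x, mp (f ≫ g) x = mp g (mp f x)) :
    FIMod where
  obj S := ModuleCat.of ℂ (V S)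
  map f := ModuleCat.ofHom (mp f)
  map_id S := by ext x; exact hid S x
  map_comp f g := by ext x; exact hcomp f g x

def mkHom {M N : FIMod} (a : ∀ S, M.obj S →ₗ[ℂ] N.obj S)
    (h : ∀ {S T : FIObj} (f : S ⟶ T) x, a T (M.map f x) = N.map f (a S x)) : M ⟶ N where
  app S := ModuleCat.ofHom (a S)
  naturality S T f := by ext x; exact h f x

@[simp] lemma mkHom_app {M N : FIMod} (a : ∀ S, M.obj S →ₗ[ℂ] N.obj S)
    (h : ∀ {S T : FIObj} (f : S ⟶ T) x, a T (M.map f x) = N.map f (a S x)) (S : FIObj)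
    (x : M.obj S) : (mkHom a h).app S x = a S x := rfl

lemma nat {M N : FIMod} (φ : M ⟶ N) {S T : FIObj} (f : S ⟶ T) (x : M.obj S) :
    φ.app T (M.map f x) = N.map f (φ.app S x) := NatTrans.naturality_apply φ f x

lemma map_comp' (M : FIMod) {S T U : FIObj} (f : S ⟶ T) (g : T ⟶ U) (x : M.obj S) :
    M.map g (M.map f x) = M.map (f ≫ g) x := by
  rw [M.map_comp]; rfl

lemma map_id' (M : FIMod) {S : FIObj} (x : M.obj S) : M.map (𝟙 S) x = x := by
  rw [M.map_id]; rfl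

lemma hom_ext' {M N : FIMod} {φ ψ : M ⟶ N} (h : ∀ S (x : M.obj S), φ.app S x = ψ.app S x) :
    φ = ψ := by
  ext S x; exact h S x

instance (S T : FIObj) : Finite (S ⟶ T) :=
  inferInstanceAs (Finite {f : S.α → T.α // Function.Injective f})

def isoHom {S T : FIObj} (e : S.α ≃ T.α) : S ⟶ T := ⟨e, e.injective⟩

lemma isoHom_symm {S T : FIObj} (e : S.α ≃ T.α) : isoHom e ≫ isoHom e.symm = 𝟙 S :=
  Subtype.ext (funext fun x => e.symm_apply_apply x)

lemma isoHom_symm' {S T : FIObj} (e : S.α ≃ T.α) : isoHom e.symm ≫ isoHom e = 𝟙 T :=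
  Subtype.ext (funext fun x => e.apply_symm_apply x)

/-- finite generation in degrees below `D` -/
def FGd (M : FIMod) (D : ℕ) : Prop :=
  (∀ S, Module.Finite ℂ (M.obj S)) ∧
    ∀ N : FISub M, (∀ k < D, ∀ x : M.obj (FIObj.of (Fin k)), x ∈ N.carrier _) →
      ∀ T x, x ∈ N.carrier T

def spanSub {M : FIMod} (G : ∀ S, Set (M.obj S)) : FISub M where
  carrier T := Submodule.span ℂ {y | ∃ (S : FIObj) (f : S ⟶ T) (x : M.obj S), x ∈ G S ∧ y = M.map f x}
  map_mem := by
    intro S T f x hx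
    induction hx using Submodule.span_induction with
    | mem x h =>
      obtain ⟨U, g, z, hz, rfl⟩ := h
      exact Submodule.subset_span ⟨U, g ≫ f, z, hz, map_comp' M g f z⟩
    | zero => simp
    | add x y _ _ hx hy => rw [map_add]; exact add_mem hx hy
    | smul a x _ hx => rw [map_smul]; exact Submodule.smul_mem _ _ hx

lemma mem_spanSub {M : FIMod} (G : ∀ S, Set (M.obj S)) {S : FIObj} {x : M.obj S} (h : x ∈ G S) :
    x ∈ (spanSub G).carrier S :=
  Submodule.subset_span ⟨S, 𝟙 S, x, h, (map_id' M x).symm⟩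

lemma mem_of_fin {M : FIMod} (N : FISub M) {S : FIObj}
    (h : ∀ x : M.obj (FIObj.of (Fin (Fintype.card S.α))), x ∈ N.carrier _) (x : M.obj S) :
    x ∈ N.carrier S := by
  let e : S.α ≃ (FIObj.of (Fin (Fintype.card S.α))).α := Fintype.equivFin S.α
  have := N.map_mem (isoHom e.symm) _ (h (M.map (isoHom e) x))
  rwa [map_comp', isoHom_symm, map_id'] at this

lemma FGd_of_FG {M : FIMod} (h : FIMod.FG M) : ∃ D, FGd M D := by
  obtain ⟨k, S, m, hm⟩ := h
  refine ⟨(Finset.univ.sup fun i => Fintype.card (S i).α) + 1, ?_, ?_⟩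
  · intro T
    have h1 := hm (spanSub fun U => {x | ∃ i, ∃ h : S i = U, h ▸ m i = x})
      (fun i => mem_spanSub _ ⟨i, rfl, rfl⟩) T
    have hf : (Set.range fun p : (Σ i, (S i ⟶ T)) => M.map p.2 (m p.1)).Finite := Set.finite_range _
    refine ⟨⟨hf.toFinset, ?_⟩⟩
    rw [eq_top_iff, ← h1]
    refine Submodule.span_mono ?_
    rintro y ⟨U, f, x, ⟨i, rfl, rfl⟩, rfl⟩
    simpa using ⟨i, f, rfl⟩
  · intro N hN T x
    rw [hm N (fun i => mem_of_fin N (hN _ ?_) _) T]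
    · trivial
    · exact Nat.lt_succ_of_le (Finset.le_sup (f := fun i => Fintype.card (S i).α) (Finset.mem_univ i))

lemma FG_of_FGd {M : FIMod} {D : ℕ} (h : FGd M D) : FIMod.FG M := by
  obtain ⟨hf, hg⟩ := h
  let b := fun k : Fin D => Module.finBasis ℂ (M.obj (FIObj.of (Fin k)))
  let J := Σ k : Fin D, Fin (Module.finrank ℂ (M.obj (FIObj.of (Fin k))))
  let e : J ≃ Fin (Fintype.card J) := Fintype.equivFin J
  refine ⟨Fintype.card J, fun i => FIObj.of (Fin (e.symm i).1), fun i => b _ (e.symm i).2, ?_⟩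
  intro N hN T
  rw [eq_top_iff]
  intro x _
  refine hg N ?_ T x
  intro k hk x
  have : x ∈ Submodule.span ℂ (Set.range (b ⟨k, hk⟩)) := by
    rw [(b ⟨k, hk⟩).span_eq]; trivial
  refine (Submodule.span_le.2 ?_) this
  rintro _ ⟨j, rfl⟩
  have := hN (e ⟨⟨k, hk⟩, j⟩)
  have key : ∀ q : J, q = ⟨⟨k, hk⟩, j⟩ → b q.1 q.2 ∈ N.carrier (FIObj.of (Fin q.1)) →
    b ⟨k, hk⟩ j ∈ N.carrier (FIObj.of (Fin k)) := by
    rintro _ rfl h; exact h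
  exact key _ (e.symm_apply_apply _) this

lemma FGd_mono {M : FIMod} {D D' : ℕ} (h : FGd M D) (hD : D ≤ D') : FGd M D' :=
  ⟨h.1, fun N hN => h.2 N fun k hk => hN k (hk.trans_le hD)⟩

/-- comap of a submodule -/
def comapSub {M M' : FIMod} (φ : M ⟶ M') (N : FISub M') : FISub M where
  carrier S := (N.carrier S).comap (φ.app S).hom
  map_mem f x hx := by
    have := N.map_mem f _ hx
    rw [Submodule.mem_comap]
    erw [nat φ f x]; exact this

lemma mem_comapSub {M M' : FIMod} (φ : M ⟶ M') (N : FISub M') {S : FIObj} (x : M.obj S) :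
  x ∈ (comapSub φ N).carrier S ↔ φ.app S x ∈ N.carrier S := Iff.rfl

lemma FGd_quot {M C : FIMod} {D : ℕ} (π : M ⟶ C) (hπ : ∀ S, Function.Surjective (π.app S))
    (h : FGd M D) : FGd C D := by
  refine ⟨fun S => ?_, fun N hN T x => ?_⟩
  · have := h.1 S
    exact Module.Finite.of_surjective (π.app S).hom (hπ S)
  · obtain ⟨y, rfl⟩ := hπ T x
    exact h.2 (comapSub π N) (fun k hk x => hN k hk _) T y

/-- kernel of equalizer-type -/
def eqSub {M M' : FIMod} (φ ψ : M ⟶ M') : FISub M where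
  carrier S := LinearMap.eqLocus (φ.app S).hom (ψ.app S).hom
  map_mem f x hx := by
    rw [LinearMap.mem_eqLocus] at *
    change φ.app _ (M.map f x) = ψ.app _ (M.map f x)
    rw [nat, nat]
    exact congrArg _ hx

lemma FGd_hom_ext {M M' : FIMod} {D : ℕ} (h : FGd M D) {φ ψ : M ⟶ M'}
    (hk : ∀ k < D, ∀ x : M.obj (FIObj.of (Fin k)), φ.app _ x = ψ.app _ x) : φ = ψ :=
  hom_ext' fun S x => h.2 (eqSub φ ψ) (fun k hD x => hk k hD x) S x

/-- submodule as module -/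
def sMod {M : FIMod} (N : FISub M) : FIMod :=
  mkMod (fun S => N.carrier S)
    (fun f => (M.map f).hom.restrict (fun x hx => N.map_mem f x hx))
    (fun S x => Subtype.ext (map_id' M _))
    (fun f g x => Subtype.ext (map_comp' M f g _).symm)

def sIncl {M : FIMod} (N : FISub M) : sMod N ⟶ M :=
  mkHom (fun S => (N.carrier S).subtype) (fun _ _ => rfl)

lemma sIncl_inj {M : FIMod} (N : FISub M) (S : FIObj) : Function.Injective ((sIncl N).app S) :=
  Subtype.val_injective

def sElt {M : FIMod} (N : FISub M) {S : FIObj} (x : M.obj S) (h : x ∈ N.carrier S) :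
    (sMod N).obj S := (⟨x, h⟩ : N.carrier S)

@[simp] lemma sIncl_sElt {M : FIMod} (N : FISub M) {S : FIObj} (x : M.obj S)
    (h : x ∈ N.carrier S) : (sIncl N).app S (sElt N x h) = x := rfl

lemma sIncl_mem {M : FIMod} (N : FISub M) {S : FIObj} (x : (sMod N).obj S) :
    (sIncl N).app S x ∈ N.carrier S := Subtype.prop (p := fun x => x ∈ N.carrier S) x

def sLift {M A : FIMod} (N : FISub M) (φ : A ⟶ M) (h : ∀ S x, φ.app S x ∈ N.carrier S) :
    A ⟶ sMod N :=
  mkHom (fun S => (φ.app S).hom.codRestrict (N.carrier S) (h S))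
    (fun f x => Subtype.ext (nat φ f x))

lemma sLift_incl {M A : FIMod} (N : FISub M) (φ : A ⟶ M) (h : ∀ S x, φ.app S x ∈ N.carrier S) :
    sLift N φ h ≫ sIncl N = φ := hom_ext' fun _ _ => rfl

/-- quotient -/
def qMod {M : FIMod} (N : FISub M) : FIMod :=
  mkMod (fun S => M.obj S ⧸ N.carrier S)
    (fun f => Submodule.mapQ _ _ (M.map f).hom (fun x hx => N.map_mem f x hx))
    (fun S x => by
      obtain ⟨x, rfl⟩ := Submodule.Quotient.mk_surjective _ x
      exact congrArg _ (map_id' M x))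
    (fun f g x => by
      obtain ⟨x, rfl⟩ := Submodule.Quotient.mk_surjective _ x
      exact congrArg _ (map_comp' M f g x).symm)

def qProj {M : FIMod} (N : FISub M) : M ⟶ qMod N :=
  mkHom (fun S => (N.carrier S).mkQ) (fun _ _ => rfl)

lemma qProj_surj {M : FIMod} (N : FISub M) (S : FIObj) : Function.Surjective ((qProj N).app S) :=
  Submodule.Quotient.mk_surjective _

lemma qProj_eq_zero {M : FIMod} (N : FISub M) (S : FIObj) (x : M.obj S) :
    (qProj N).app S x = 0 ↔ x ∈ N.carrier S :=
  Submodule.Quotient.mk_eq_zero _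

def rangeSub {M M' : FIMod} (φ : M ⟶ M') : FISub M' where
  carrier S := LinearMap.range (φ.app S).hom
  map_mem := by
    rintro S T f _ ⟨x, rfl⟩
    exact ⟨M.map f x, nat φ f x⟩

/-- finite products -/
def pMod {ι : Type} (F : ι → FIMod) : FIMod :=
  mkMod (fun S => ∀ i, (F i).obj S)
    (fun f => LinearMap.pi fun i => ((F i).map f).hom ∘ₗ LinearMap.proj i)
    (fun S x => funext fun i => map_id' (F i) _)
    (fun f g x => funext fun i => (map_comp' (F i) f g _).symm)

def pProj {ι : Type} (F : ι → FIMod) (i : ι) : pMod F ⟶ F i :=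
  mkHom (fun S => LinearMap.proj (R := ℂ) (φ := fun i => (F i).obj S) i) (fun _ _ => rfl)

def pLift {ι : Type} {F : ι → FIMod} {A : FIMod} (φ : ∀ i, A ⟶ F i) : A ⟶ pMod F :=
  mkHom (fun S => LinearMap.pi (φ := fun i => (F i).obj S) fun i => ((φ i).app S).hom)
    (fun f x => funext fun i => nat (φ i) f x)

lemma pLift_proj {ι : Type} {F : ι → FIMod} {A : FIMod} (φ : ∀ i, A ⟶ F i) (i : ι) :
    pLift φ ≫ pProj F i = φ i := hom_ext' fun _ _ => rfl

lemma pProj_ext {ι : Type} {F : ι → FIMod} {S : FIObj} {x y : (pMod F).obj S}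
    (h : ∀ i, (pProj F i).app S x = (pProj F i).app S y) : x = y :=
  funext fun i => h i

def pIncl {ι : Type} [DecidableEq ι] (F : ι → FIMod) (i : ι) : F i ⟶ pMod F :=
  mkHom (fun S => LinearMap.single ℂ (fun i => (F i).obj S) i) (fun {S T} f x => by
    refine funext fun j => ?_
    change Pi.single (M := fun i => (F i).obj T) i ((F i).map f x) j
      = (F j).map f (Pi.single (M := fun i => (F i).obj S) i x j)
    by_cases h : j = i
    · subst h; simp
    · simp [h])

lemma pIncl_sum {ι : Type} [Fintype ι] [DecidableEq ι] (F : ι → FIMod) {S : FIObj}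
    (x : (pMod F).obj S) : x = ∑ i, (pIncl F i).app S ((pProj F i).app S x) :=
  (Finset.univ_sum_single (M := fun i => (F i).obj S) x).symm

lemma FGd_pMod {ι : Type} [Fintype ι] {F : ι → FIMod} {D : ℕ} (h : ∀ i, FGd (F i) D) :
    FGd (pMod F) D := by
  classical
  refine ⟨fun S => ?_, fun N hN T x => ?_⟩
  · have := fun i => (h i).1 S
    exact inferInstanceAs (Module.Finite ℂ (∀ i, (F i).obj S))
  · rw [pIncl_sum F x]
    exact sum_mem fun i _ => (h i).2 (comapSub (pIncl F i) N) (fun k hk x => hN k hk _) T _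

/-- injectivity among all modules -/
def Inj (I : FIMod) : Prop :=
  ∀ (X Y : FIMod) (i : X ⟶ Y), (∀ S : FIObj, Function.Injective (i.app S)) →
      ∀ f : X ⟶ I, ∃ g : Y ⟶ I, i ≫ g = f

lemma Inj_pMod {ι : Type} {F : ι → FIMod} (h : ∀ i, Inj (F i)) : Inj (pMod F) := by
  intro X Y i hi f
  choose g hg using fun j => h j X Y i hi (f ≫ pProj F j)
  refine ⟨pLift g, hom_ext' fun S x => pProj_ext fun j => ?_⟩
  exact congrArg (fun φ => φ.app S x) (hg j)

lemma Inj_retract {I J : FIMod} (a : I ⟶ J) (b : J ⟶ I) (hab : a ≫ b = 𝟙 I) (h : Inj J) :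
    Inj I := by
  intro X Y i hi f
  obtain ⟨g, hg⟩ := h X Y i hi (f ≫ a)
  exact ⟨g ≫ b, by rw [← Category.assoc, hg, Category.assoc, hab, Category.comp_id]⟩

def HasRes (M : FIMod) : Prop :=
    ∃ (n : ℕ) (I : ℕ → FIMod) (ι : M ⟶ I 0) (d : ∀ j, I j ⟶ I (j + 1)),
      (∀ j, FIMod.FG (I j)) ∧
      (∀ j, InjectiveInFG (I j)) ∧
      (∀ j, n < j → ∀ (S : FIObj) (x : (I j).obj S), x = 0) ∧
      (∀ S : FIObj, Function.Injective (ι.app S)) ∧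
      (∀ S : FIObj, LinearMap.range (ι.app S).hom = LinearMap.ker ((d 0).app S).hom) ∧
      (∀ (j : ℕ) (S : FIObj),
        LinearMap.range ((d j).app S).hom = LinearMap.ker ((d (j + 1)).app S).hom)

lemma HasRes_zero {M : FIMod} (h : ∀ S (x : M.obj S), x = 0) : HasRes M := by
  have hfg : FGd M 0 := by
    refine ⟨fun S => ?_, fun N _ T x => ?_⟩
    · have : Subsingleton (M.obj S) := ⟨fun a b => by rw [h S a, h S b]⟩
      infer_instance
    · rw [h T x]; exact zero_mem _
  refine ⟨0, fun _ => M, 𝟙 M, fun _ => 𝟙 M, fun _ => FG_of_FGd hfg, ?_, fun _ _ => h, ?_, ?_, ?_⟩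
  · intro _ X Y _ _ i _ f
    exact ⟨0, hom_ext' fun S x => by rw [h _ (f.app S x), h _ ((i ≫ 0).app S x)]⟩
  · intro S a b _; rw [h S a, h S b]
  · intro S; ext x; rw [h S x]; simp
  · intro _ S; ext x; rw [h S x]; simp

lemma HasRes_step {M I : FIMod} {D : ℕ} (hI : FGd I D) (hI' : Inj I) (a : M ⟶ I)
    (ha : ∀ S, Function.Injective (a.app S)) (hC : HasRes (qMod (rangeSub a))) : HasRes M := by
  obtain ⟨n, J, ι, d, h1, h2, h3, h4, h5, h6⟩ := hC
  let π := qProj (rangeSub a)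
  refine ⟨n + 1, fun j => Nat.casesOn j I J, a, fun j => match j with
    | 0 => π ≫ ι
    | j + 1 => d j, ?_, ?_, ?_, ha, ?_, ?_⟩
  · rintro (_ | j)
    · exact FG_of_FGd hI
    · exact h1 j
  · rintro (_ | j)
    · exact fun X Y _ _ => hI' X Y
    · exact h2 j
  · rintro (_ | j) hj
    · omega
    · exact h3 j (by omega)
  · intro S
    ext x
    change x ∈ (rangeSub a).carrier S ↔ ι.app S (π.app S x) = 0
    rw [← qProj_eq_zero]
    constructor
    · intro h; change π.app S x = 0 at h; rw [h, map_zero]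
    · intro h; apply h4 S; rw [map_zero]; exact h
  · rintro (_ | j) S
    · rw [← h5]
      ext x
      constructor
      · rintro ⟨y, rfl⟩; exact ⟨_, rfl⟩
      · rintro ⟨y, rfl⟩
        obtain ⟨z, rfl⟩ := qProj_surj _ S y
        exact ⟨z, rfl⟩
    · exact h6 j S

end FIR


namespace FIR

structure Shape (G : Type) [Group G] where
  H : FIObj → Type
  fin : ∀ S, Finite (H S)
  pull : ∀ {S T : FIObj}, (S ⟶ T) → H T → H S
  pull_id : ∀ {S : FIObj} (f : H S), pull (𝟙 S) f = f
  pull_comp : ∀ {S T U : FIObj} (i : S ⟶ T) (j : T ⟶ U) (f : H U),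
    pull (i ≫ j) f = pull i (pull j f)
  act : G → ∀ {S : FIObj}, H S → H S
  act_one : ∀ {S : FIObj} (f : H S), act 1 f = f
  act_mul : ∀ (σ τ : G) {S : FIObj} (f : H S), act (σ * τ) f = act σ (act τ f)
  act_pull : ∀ (σ : G) {S T : FIObj} (i : S ⟶ T) (f : H T), pull i (act σ f) = act σ (pull i f)
  pred : ∀ {S : FIObj}, H S → Prop
  pred_pull : ∀ {S T : FIObj} (i : S ⟶ T) (f : H T), pred (pull i f) → pred f
  pred_act : ∀ (σ : G) {S : FIObj} (f : H S), pred (act σ f) → pred f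

section Co
variable {G : Type} [Group G] (Q : Shape G) (W : Type) [AddCommGroup W] [Module ℂ W]

def Co : FIMod :=
  mkMod (fun S => Q.H S → W) (fun f => LinearMap.funLeft ℂ W (Q.pull f))
    (fun S x => funext fun f => congrArg x (Q.pull_id f))
    (fun i j x => funext fun f => congrArg x (Q.pull_comp i j f))

variable {W} in
/-- evaluation at `f` -/
def ev {S : FIObj} (f : Q.H S) : (Co Q W).obj S →ₗ[ℂ] W :=
  LinearMap.proj (R := ℂ) (φ := fun _ : Q.H S => W) f

variable {Q W}

lemma Co_ext {S : FIObj} {w w' : (Co Q W).obj S} (h : ∀ f, ev Q f w = ev Q f w') : w = w' :=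
  funext h

lemma ev_map {S T : FIObj} (i : S ⟶ T) (w : (Co Q W).obj S) (f : Q.H T) :
    ev Q f ((Co Q W).map i w) = ev Q (Q.pull i f) w := rfl

/-- a morphism into `Co` is a compatible family -/
def toCo {M : FIMod} (a : ∀ S, Q.H S → (M.obj S →ₗ[ℂ] W))
    (h : ∀ {S T : FIObj} (i : S ⟶ T) (f : Q.H T) x, a T f (M.map i x) = a S (Q.pull i f) x) :
    M ⟶ Co Q W :=
  mkHom (fun S => LinearMap.pi (φ := fun _ : Q.H S => W) (a S)) (fun i x => funext fun f => h i f x)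

@[simp] lemma ev_toCo {M : FIMod} (a : ∀ S, Q.H S → (M.obj S →ₗ[ℂ] W))
    (h : ∀ {S T : FIObj} (i : S ⟶ T) (f : Q.H T) x, a T f (M.map i x) = a S (Q.pull i f) x)
    {S : FIObj} (f : Q.H S) (x : M.obj S) : ev Q f ((toCo a h).app S x) = a S f x := rfl

lemma ev_nat {M : FIMod} (φ : M ⟶ Co Q W) {S T : FIObj} (i : S ⟶ T) (f : Q.H T) (x : M.obj S) :
    ev Q f (φ.app T (M.map i x)) = ev Q (Q.pull i f) (φ.app S x) := by
  rw [nat, ev_map]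

instance Co_fin [Module.Finite ℂ W] (S : FIObj) : Module.Finite ℂ ((Co Q W).obj S) := by
  have := Q.fin S
  exact inferInstanceAs (Module.Finite ℂ (Q.H S → W))

variable [Fintype G] (ρ : Representation ℂ G W)

noncomputable def avg : Co Q W ⟶ Co Q W :=
  toCo (fun S f => (Fintype.card G : ℂ)⁻¹ • ∑ σ, ρ σ ∘ₗ ev Q (Q.act σ⁻¹ f)) (fun i f x => by
    simp [ev_map, Q.act_pull])

lemma ev_avg {S : FIObj} (f : Q.H S) (w : (Co Q W).obj S) :
    ev Q f ((avg ρ).app S w) = (Fintype.card G : ℂ)⁻¹ • ∑ σ, ρ σ (ev Q (Q.act σ⁻¹ f) w) := by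
  change ((Fintype.card G : ℂ)⁻¹ • ∑ σ, ρ σ ∘ₗ ev Q (Q.act σ⁻¹ f)) w = _
  simp only [LinearMap.smul_apply, LinearMap.sum_apply, LinearMap.comp_apply]

def eSub (Q : Shape G) : FISub (Co Q W) where
  carrier S :=
    { carrier := {w | (∀ f, ¬ Q.pred f → ev Q f w = 0) ∧ ∀ σ f, ev Q (Q.act σ f) w = ρ σ (ev Q f w)}
      add_mem' := by
        rintro a b ⟨h1, h2⟩ ⟨h3, h4⟩
        exact ⟨fun f hf => by rw [map_add, h1 f hf, h3 f hf, add_zero],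
          fun σ f => by rw [map_add, h2, h4, map_add, map_add]⟩
      zero_mem' := ⟨fun f _ => map_zero _, fun σ f => by rw [map_zero, map_zero, map_zero]⟩
      smul_mem' := by
        rintro c a ⟨h1, h2⟩
        exact ⟨fun f hf => by rw [map_smul, h1 f hf, smul_zero],
          fun σ f => by rw [map_smul, h2, map_smul, map_smul]⟩ }
  map_mem i w hw := by
    refine ⟨fun f hf => ?_, fun σ f => ?_⟩
    · rw [ev_map]; exact hw.1 _ fun h => hf (Q.pred_pull i f h)
    · rw [ev_map, ev_map, Q.act_pull, hw.2]

lemma mem_eSub {S : FIObj} (w : (Co Q W).obj S) : w ∈ (eSub ρ Q).carrier S ↔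
    (∀ f, ¬ Q.pred f → ev Q f w = 0) ∧ ∀ σ f, ev Q (Q.act σ f) w = ρ σ (ev Q f w) := Iff.rfl

lemma avg_mem {S : FIObj} (w : (Co Q W).obj S) (h : ∀ f, ¬ Q.pred f → ev Q f w = 0) :
    (avg ρ).app S w ∈ (eSub ρ Q).carrier S := by
  refine ⟨fun f hf => ?_, fun τ f => ?_⟩
  · rw [ev_avg, Finset.sum_eq_zero, smul_zero]
    intro σ _
    rw [h _ fun h' => hf (Q.pred_act _ _ h'), map_zero]
  · rw [ev_avg, ev_avg, map_smul, map_sum]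
    congr 1
    rw [← Equiv.sum_comp (Equiv.mulLeft τ)]
    refine Finset.sum_congr rfl fun σ _ => ?_
    simp only [Equiv.coe_mulLeft, map_mul, mul_inv_rev, Q.act_mul]
    rw [← Q.act_mul τ⁻¹ τ, inv_mul_cancel, Q.act_one]
    rfl

lemma avg_id {S : FIObj} (w : (Co Q W).obj S) (h : w ∈ (eSub ρ Q).carrier S) :
    (avg ρ).app S w = w := by
  refine Co_ext fun f => ?_
  rw [ev_avg]
  have : ∀ σ ∈ Finset.univ, ρ σ (ev Q (Q.act σ⁻¹ f) w) = ev Q f w := by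
    intro σ _
    rw [← h.2, ← Q.act_mul, mul_inv_cancel, Q.act_one]
  rw [Finset.sum_congr rfl this, Finset.sum_const, Finset.card_univ, ← Nat.cast_smul_eq_nsmul ℂ,
    smul_smul, inv_mul_cancel₀, one_smul]
  exact Nat.cast_ne_zero.2 Fintype.card_ne_zero

abbrev eMod (Q : Shape G) : FIMod := sMod (eSub ρ Q)

lemma Inj_eMod (h : Inj (Co Q W)) (q : Co Q W ⟶ Co Q W)
    (hq : ∀ S w (f : Q.H S), ¬ Q.pred f → ev Q f (q.app S w) = 0)
    (hq' : ∀ S w, (∀ f : Q.H S, ¬ Q.pred f → ev Q f w = 0) → q.app S w = w) : Inj (eMod ρ Q) := by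
  refine Inj_retract (sIncl _) (sLift _ (q ≫ avg ρ) fun S w => avg_mem ρ _ (hq S w)) ?_ h
  refine hom_ext' fun S w => sIncl_inj _ S ?_
  change (avg ρ).app S (q.app S ((sIncl (eSub ρ Q)).app S w)) = (sIncl (eSub ρ Q)).app S w
  have := sIncl_mem _ w
  rw [hq' S _ this.1, avg_id ρ _ this]

instance eMod_fin [Module.Finite ℂ W] (S : FIObj) : Module.Finite ℂ ((eMod ρ Q).obj S) :=
  inferInstanceAs (Module.Finite ℂ ((eSub ρ Q).carrier S))

end Co

/-! ### finite-support injectives -/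

def permHom {k : ℕ} (σ : Equiv.Perm (Fin k)) : FIObj.of (Fin k) ⟶ FIObj.of (Fin k) :=
  ⟨σ, σ.injective⟩

def Esh (k : ℕ) : Shape (Equiv.Perm (Fin k)) where
  H S := S ⟶ FIObj.of (Fin k)
  fin S := inferInstance
  pull i h := i ≫ h
  pull_id _ := rfl
  pull_comp _ _ _ := rfl
  act σ _ h := h ≫ permHom σ
  act_one _ := rfl
  act_mul _ _ _ _ := rfl
  act_pull _ _ _ _ _ := rfl
  pred _ := True
  pred_pull _ _ _ := trivial
  pred_act _ _ _ _ := trivial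

lemma ext_lin {A B V : Type} [AddCommGroup A] [Module ℂ A] [AddCommGroup B] [Module ℂ B]
    [AddCommGroup V] [Module ℂ V] (i : A →ₗ[ℂ] B) (hi : Function.Injective i) (f : A →ₗ[ℂ] V) :
    ∃ g : B →ₗ[ℂ] V, ∀ x, g (i x) = f x := by
  obtain ⟨j, hj⟩ := i.exists_leftInverse_of_injective (LinearMap.ker_eq_bot.2 hi)
  refine ⟨f ∘ₗ j, fun x => ?_⟩
  exact congrArg f (LinearMap.congr_fun hj x)

lemma Inj_Co_E (k : ℕ) (W : Type) [AddCommGroup W] [Module ℂ W] : Inj (Co (Esh k) W) := by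
  intro X Y i hi f
  let K := FIObj.of (Fin k)
  obtain ⟨g, hg⟩ := ext_lin (i.app K).hom (hi K) (ev (Esh k) (𝟙 K) ∘ₗ (f.app K).hom)
  refine ⟨toCo (fun S h => g ∘ₗ (Y.map h).hom) ?_, hom_ext' fun S x => Co_ext fun (h : S ⟶ K) => ?_⟩
  · intro S T j h x
    exact congrArg g (map_comp' Y j h x)
  · change g (Y.map h (i.app S x)) = _
    rw [← nat i]
    refine (hg _).trans ?_
    exact ev_nat f h (𝟙 K) x

def permRep (M : FIMod) (k : ℕ) : Representation ℂ (Equiv.Perm (Fin k))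
    (M.obj (FIObj.of (Fin k))) where
  toFun σ := (M.map (permHom σ)).hom
  map_one' := by ext x; exact map_id' M x
  map_mul' σ τ := by
    ext x
    exact (map_comp' M (permHom τ) (permHom σ) x).symm

lemma FGd_bdd {M : FIMod} {N : ℕ} (hf : ∀ S, Module.Finite ℂ (M.obj S))
    (h0 : ∀ S : FIObj, N ≤ Fintype.card S.α → ∀ x : M.obj S, x = 0) : FGd M N := by
  refine ⟨hf, fun L hL T x => ?_⟩
  by_cases h : N ≤ Fintype.card T.α
  · rw [h0 T h x]; exact zero_mem _
  · exact mem_of_fin L (hL _ (by omega)) x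

lemma bdd_embed {M : FIMod} {N : ℕ} (hf : ∀ S, Module.Finite ℂ (M.obj S))
    (h0 : ∀ S : FIObj, N ≤ Fintype.card S.α → ∀ x : M.obj S, x = 0) :
    ∃ (E : FIMod) (a : M ⟶ E), (∀ S, Module.Finite ℂ (E.obj S)) ∧
      (∀ S : FIObj, N ≤ Fintype.card S.α → ∀ x : E.obj S, x = 0) ∧ Inj E ∧
      (∀ S, Function.Injective (a.app S)) ∧
      ∀ S : FIObj, N ≤ Fintype.card S.α + 1 → Function.Surjective (a.app S) := by
  let F : Fin N → FIMod := fun k => eMod (permRep M k) (Esh k)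
  let b : ∀ k : Fin N, M ⟶ Co (Esh k) (M.obj (FIObj.of (Fin k))) := fun k =>
    toCo (fun S h => (M.map h).hom) (fun i h x => map_comp' M i h x)
  have hb : ∀ (k : Fin N) S x, (b k).app S x ∈ (eSub (permRep M k) (Esh k)).carrier S := by
    intro k S x
    refine ⟨fun f hf => (hf trivial).elim, fun σ f => ?_⟩
    exact (map_comp' M f (permHom σ) x).symm
  have hemp : ∀ (S : FIObj) (k : Fin N), (k : ℕ) < Fintype.card S.α → ∀ x y : (F k).obj S, x = y := by
    intro S k hk x y
    refine sIncl_inj _ S (Co_ext fun f => ?_)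
    exfalso
    have := Fintype.card_le_of_injective f.1 f.2
    have h2 : Fintype.card (FIObj.of (Fin k)).α = k := Fintype.card_fin _
    omega
  refine ⟨pMod F, pLift fun k => sLift _ (b k) (hb k), ?_, ?_, ?_, ?_, ?_⟩
  · intro S
    have := hf
    have : ∀ k, Module.Finite ℂ ((F k).obj S) := fun k => eMod_fin _ S
    exact inferInstanceAs (Module.Finite ℂ (∀ i, (F i).obj S))
  · intro S hS x
    exact pProj_ext fun k => hemp S k (by omega) _ _
  · exact Inj_pMod fun k => Inj_eMod _ (Inj_Co_E k _) (𝟙 _) (fun _ _ _ h => (h trivial).elim)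
      (fun _ _ _ => rfl)
  · intro S
    by_cases hS : N ≤ Fintype.card S.α
    · intro x y _; rw [h0 S hS x, h0 S hS y]
    · rw [← LinearMap.ker_eq_bot (f := ((pLift fun k => sLift _ (b k) (hb k)).app S).hom), eq_bot_iff]
      intro x hx
      let k : Fin N := ⟨Fintype.card S.α, by omega⟩
      let e : S.α ≃ (FIObj.of (Fin k)).α := Fintype.equivFin S.α
      have h1 : M.map (isoHom e) x = 0 := by
        have h2 := congrArg (fun z => ev (Esh k) (isoHom e) ((sIncl _).app S ((pProj F k).app S z))) hx
        refine Eq.trans ?_ (h2.trans ?_)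
        · rfl
        · simp only [map_zero]
      have h2 := congrArg (M.map (isoHom e.symm)) h1
      rw [map_comp', isoHom_symm, map_id', map_zero] at h2
      exact h2
  · intro S hS y
    by_cases hS' : N ≤ Fintype.card S.α
    · exact ⟨0, pProj_ext fun k => hemp S k (by omega) _ _⟩
    let k : Fin N := ⟨Fintype.card S.α, by omega⟩
    let e : S.α ≃ (FIObj.of (Fin k)).α := Fintype.equivFin S.α
    let w := (sIncl _).app S ((pProj F k).app S y)
    have hw : w ∈ (eSub (permRep M k) (Esh k)).carrier S := sIncl_mem _ _
    refine ⟨M.map (isoHom e.symm) (ev (Esh k) (isoHom e) w), pProj_ext fun j => ?_⟩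
    by_cases hj : j = k
    · subst hj
      refine sIncl_inj _ S (Co_ext fun (f : S ⟶ FIObj.of (Fin k)) => ?_)
      change M.map f (M.map (isoHom e.symm) (ev (Esh k) (isoHom e) w)) = ev (Esh k) f w
      rw [map_comp']
      have hbij : Function.Bijective f.1 := by
        refine (Fintype.bijective_iff_injective_and_card _).2 ⟨f.2, ?_⟩
        exact (Fintype.card_fin _).symm
      let σ : Equiv.Perm (Fin k) := e.symm.trans (Equiv.ofBijective f.1 hbij)
      have e1 : isoHom e.symm ≫ f = permHom σ := rfl
      have e2 : f = (Esh k).act σ (isoHom e) :=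
        Subtype.ext (funext fun x => congrArg f.1 (e.symm_apply_apply x).symm)
      rw [e1]
      conv_rhs => rw [e2]
      exact (hw.2 σ (isoHom e)).symm
    · refine hemp S j ?_ _ _
      have : (j : ℕ) ≠ k := fun h => hj (Fin.ext h)
      have hk : (k : ℕ) = Fintype.card S.α := rfl
      omega

lemma bdd_res (N : ℕ) : ∀ {M : FIMod}, (∀ S, Module.Finite ℂ (M.obj S)) →
    (∀ S : FIObj, N ≤ Fintype.card S.α → ∀ x : M.obj S, x = 0) → HasRes M := by
  induction N with
  | zero => exact fun _ h0 => HasRes_zero fun S x => h0 S (Nat.zero_le _) x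
  | succ N ih =>
    intro M hf h0
    obtain ⟨E, a, h1, h2, h3, h4, h5⟩ := bdd_embed hf h0
    have hE := FGd_bdd h1 h2
    refine HasRes_step hE h3 a h4 (ih (FGd_quot _ (qProj_surj _) hE).1 ?_)
    intro S hS x
    obtain ⟨y, rfl⟩ := qProj_surj _ S x
    obtain ⟨z, rfl⟩ := h5 S (by omega) y
    exact (qProj_eq_zero _ S _).2 ⟨z, rfl⟩

end FIR


namespace FIR

def Xsh (d : ℕ) : Shape (Equiv.Perm (Fin d)) where
  H S := {f : S.α → Option (Fin d) // ∀ s t, f s = f t → f s ≠ none → s = t}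
  fin S := inferInstance
  pull i f := ⟨f.1 ∘ i.1, fun s t h h' => i.2 (f.2 _ _ h h')⟩
  pull_id _ := rfl
  pull_comp _ _ _ := rfl
  act σ _ f := ⟨fun s => (f.1 s).map σ, fun s t h h' =>
    f.2 s t (Option.map_injective σ.injective h) (fun h0 => h' (by simp [h0]))⟩
  act_one f := Subtype.ext (funext fun s => by simp)
  act_mul σ τ _ f := Subtype.ext (funext fun s => by
    change _ = Option.map σ (Option.map τ (f.1 s))
    rw [Option.map_map]; rfl)
  act_pull _ _ _ _ _ := rfl
  pred {S} f := ∀ j, ∃ s : S.α, f.1 s = some j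
  pred_pull i f h j := by
    obtain ⟨s, hs⟩ := h j
    exact ⟨i.1 s, hs⟩
  pred_act σ S f h j := by
    obtain ⟨s, hs⟩ := h (σ j)
    refine ⟨s, Option.map_injective σ.injective ?_⟩
    exact hs

abbrev SS (d m : ℕ) : FIObj := FIObj.of (Fin d ⊕ Fin m)

def gg (d m : ℕ) : (Xsh d).H (SS d m) :=
  ⟨fun s : Fin d ⊕ Fin m => Sum.elim some (fun _ => none) s, by
    rintro (s | s) (t | t) <;> simp
    exact fun h => congrArg _ h⟩

def pm {d m : ℕ} (σ : Equiv.Perm (Fin m)) : SS d m ⟶ SS d m :=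
  ⟨fun s : Fin d ⊕ Fin m => (Sum.map id σ s : Fin d ⊕ Fin m),
    Sum.map_injective.2 ⟨Function.injective_id, σ.injective⟩⟩

def inc {d m m' : ℕ} (h : m ≤ m') : SS d m ⟶ SS d m' :=
  ⟨fun s : Fin d ⊕ Fin m => (Sum.map id (Fin.castLE h) s : Fin d ⊕ Fin m'),
    Sum.map_injective.2 ⟨Function.injective_id, Fin.castLE_injective h⟩⟩

lemma pull_pm {d m : ℕ} (σ : Equiv.Perm (Fin m)) : (Xsh d).pull (pm σ) (gg d m) = gg d m :=
  Subtype.ext (funext fun s : Fin d ⊕ Fin m => by rcases s with s | s <;> rfl)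

lemma pull_inc {d m m' : ℕ} (h : m ≤ m') : (Xsh d).pull (inc h) (gg d m') = gg d m :=
  Subtype.ext (funext fun s : Fin d ⊕ Fin m => by rcases s with s | s <;> rfl)

lemma exists_hom {d : ℕ} {S : FIObj} (f : (Xsh d).H S) {m : ℕ} (hm : Fintype.card S.α ≤ m) :
    ∃ i : S ⟶ SS d m, (Xsh d).pull i (gg d m) = f := by
  let a : S.α → Fin d ⊕ Fin m := fun s =>
    match f.1 s with
    | some j => Sum.inl j
    | none => Sum.inr (Fin.castLE hm (Fintype.equivFin S.α s))
  have ha1 : ∀ s j, f.1 s = some j → a s = Sum.inl j := fun s j h => by simp only [a, h]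
  have ha2 : ∀ s, f.1 s = none → a s = Sum.inr (Fin.castLE hm (Fintype.equivFin S.α s)) :=
    fun s h => by simp only [a, h]
  refine ⟨⟨a, ?_⟩, Subtype.ext (funext fun s => ?_)⟩
  · intro s t h
    rcases hs : f.1 s with _ | j <;> rcases ht : f.1 t with _ | j'
    · rw [ha2 s hs, ha2 t ht] at h
      exact (Fintype.equivFin S.α).injective (Fin.castLE_injective hm (Sum.inr_injective h))
    · rw [ha2 s hs, ha1 t _ ht] at h; cases h
    · rw [ha1 s _ hs, ha2 t ht] at h; cases h
    · rw [ha1 s _ hs, ha1 t _ ht] at h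
      have := Sum.inl_injective h
      exact f.2 s t (by rw [hs, ht, this]) (by simp [hs])
  · change Sum.elim some (fun _ => none) (a s) = f.1 s
    rcases hs : f.1 s with _ | j
    · rw [ha2 s hs]; rfl
    · rw [ha1 s _ hs]; rfl

lemma exists_perm {S U : Type} [Finite U] (a b : S → U) (ha : Function.Injective a)
    (hb : Function.Injective b) : ∃ σ : Equiv.Perm U, ∀ s, σ (a s) = b s := by
  classical
  have := Fintype.ofFinite U
  let e : {x // x ∈ Set.range a} ≃ {x // x ∈ Set.range b} :=
    (Equiv.ofInjective a ha).symm.trans (Equiv.ofInjective b hb)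
  refine ⟨e.extendSubtype, fun s => ?_⟩
  rw [e.extendSubtype_apply_of_mem (a s) ⟨s, rfl⟩]
  have : (⟨a s, ⟨s, rfl⟩⟩ : {x // x ∈ Set.range a}) = Equiv.ofInjective a ha s := rfl
  rw [this]
  simp [e]

lemma exists_pm {d m : ℕ} {S : FIObj} (i i' : S ⟶ SS d m)
    (h : (Xsh d).pull i (gg d m) = (Xsh d).pull i' (gg d m)) :
    ∃ σ : Equiv.Perm (Fin m), i ≫ pm σ = i' := by
  have h1 : ∀ s, Sum.elim some (fun _ => none) (i.1 s : Fin d ⊕ Fin m)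
      = (Sum.elim some (fun _ => none) (i'.1 s : Fin d ⊕ Fin m) : Option (Fin d)) := fun s =>
    congrFun (congrArg Subtype.val h) s
  have hex : ∀ s : {s : S.α // ∃ u : Fin m, i.1 s = (Sum.inr u : Fin d ⊕ Fin m)},
      ∃ u : Fin m, i'.1 s = (Sum.inr u : Fin d ⊕ Fin m) := by
    rintro ⟨s, u, hu⟩
    have := h1 s
    rw [hu] at this
    rcases hv : (i'.1 s : Fin d ⊕ Fin m) with v | v
    · rw [hv] at this; cases this
    · exact ⟨v, rfl⟩
  choose b hb using hex
  choose a ha using fun s : {s : S.α // ∃ u : Fin m, i.1 s = (Sum.inr u : Fin d ⊕ Fin m)} => s.2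
  obtain ⟨σ, hσ⟩ := exists_perm a b
    (fun s t hst => Subtype.ext (i.2 (by rw [ha s, ha t, hst])))
    (fun s t hst => Subtype.ext (i'.2 (by rw [hb s, hb t, hst])))
  refine ⟨σ, Subtype.ext (funext fun s => ?_)⟩
  change Sum.map id σ (i.1 s : Fin d ⊕ Fin m) = i'.1 s
  rcases hs : (i.1 s : Fin d ⊕ Fin m) with u | u
  · have := h1 s
    rw [hs] at this
    rcases hv : (i'.1 s : Fin d ⊕ Fin m) with v | v
    · rw [hv] at this
      have : u = v := Option.some_injective _ this
      rw [this]; rfl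
    · rw [hv] at this; cases this
  · have h2 := hb ⟨s, u, hs⟩
    have h3 := ha ⟨s, u, hs⟩
    have h4 := hσ ⟨s, u, hs⟩
    have h5 : u = a ⟨s, u, hs⟩ := Sum.inr_injective (hs.symm.trans h3)
    rw [h2, ← h4, ← h5]; rfl

/-- averaging over `Perm (Fin m)` -/
noncomputable def av (Y : FIMod) (d m : ℕ) : Y.obj (SS d m) →ₗ[ℂ] Y.obj (SS d m) :=
  (Fintype.card (Equiv.Perm (Fin m)) : ℂ)⁻¹ • ∑ σ : Equiv.Perm (Fin m), (Y.map (pm σ)).hom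

lemma av_apply (Y : FIMod) (d m : ℕ) (y : Y.obj (SS d m)) :
    av Y d m y = (Fintype.card (Equiv.Perm (Fin m)) : ℂ)⁻¹ •
      ∑ σ : Equiv.Perm (Fin m), Y.map (pm σ) y := by
  simp only [av, LinearMap.smul_apply, LinearMap.sum_apply]

lemma av_pm (Y : FIMod) (d m : ℕ) (τ : Equiv.Perm (Fin m)) (y : Y.obj (SS d m)) :
    av Y d m (Y.map (pm τ) y) = av Y d m y := by
  rw [av_apply, av_apply]
  congr 1
  rw [← Equiv.sum_comp (Equiv.mulRight τ) (fun σ => Y.map (pm σ) y)]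
  refine Finset.sum_congr rfl fun σ _ => ?_
  rw [map_comp']
  congr 2
  congr 1
  refine Subtype.ext (funext fun s : Fin d ⊕ Fin m => ?_)
  rcases s with s | s <;> rfl

lemma av_inv {V : Type} [AddCommGroup V] [Module ℂ V] (Y : FIMod) (d m : ℕ)
    (l : Y.obj (SS d m) →ₗ[ℂ] V) (y : Y.obj (SS d m)) (h : ∀ σ, l (Y.map (pm σ) y) = l y) :
    l (av Y d m y) = l y := by
  rw [av_apply, map_smul, map_sum, Finset.sum_congr rfl fun σ _ => h σ, Finset.sum_const,
    Finset.card_univ, ← Nat.cast_smul_eq_nsmul ℂ, smul_smul, inv_mul_cancel₀, one_smul]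
  exact Nat.cast_ne_zero.2 Fintype.card_ne_zero

lemma av_nat {X Y : FIMod} (φ : X ⟶ Y) (d m : ℕ) (x : X.obj (SS d m)) :
    φ.app _ (av X d m x) = av Y d m (φ.app _ x) := by
  rw [av_apply, av_apply, map_smul, map_sum]
  congr 1
  exact Finset.sum_congr rfl fun σ _ => nat φ _ _

open Classical in
noncomputable def th (Y : FIMod) (d : ℕ) {S : FIObj} (f : (Xsh d).H S) :
    Y.obj S →ₗ[ℂ] (∀ m, Y.obj (SS d m)) :=
  LinearMap.pi fun m => if h : ∃ i : S ⟶ SS d m, (Xsh d).pull i (gg d m) = f then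
    av Y d m ∘ₗ (Y.map h.choose).hom else 0

lemma th_apply (Y : FIMod) {d : ℕ} {S : FIObj} (f : (Xsh d).H S) (y : Y.obj S) {m : ℕ}
    (i : S ⟶ SS d m) (hi : (Xsh d).pull i (gg d m) = f) :
    th Y d f y m = av Y d m (Y.map i y) := by
  have h : ∃ i : S ⟶ SS d m, (Xsh d).pull i (gg d m) = f := ⟨i, hi⟩
  obtain ⟨σ, hσ⟩ := exists_pm i h.choose (hi.trans h.choose_spec.symm)
  simp only [th, LinearMap.pi_apply]
  rw [dif_pos h]
  change av Y d m (Y.map h.choose y) = _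
  rw [← hσ, ← map_comp', av_pm]

lemma graph_ext {A V : Type} [AddCommGroup A] [Module ℂ A] [AddCommGroup V] [Module ℂ V]
    (Γ : Submodule ℂ (A × V)) (h : ∀ v, ((0 : A), v) ∈ Γ → v = 0) :
    ∃ L : A →ₗ[ℂ] V, ∀ p ∈ Γ, L p.1 = p.2 := by
  obtain ⟨L, hL⟩ := ext_lin (LinearMap.fst ℂ A V ∘ₗ Γ.subtype) (by
    rw [← LinearMap.ker_eq_bot, eq_bot_iff]
    rintro ⟨⟨a, v⟩, hp⟩ h0
    have : a = 0 := h0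
    subst this
    have := h v hp
    subst this
    rfl) (LinearMap.snd ℂ A V ∘ₗ Γ.subtype)
  exact ⟨L, fun p hp => hL ⟨p, hp⟩⟩

open Filter in
lemma Inj_X (d : ℕ) (V : Type) [AddCommGroup V] [Module ℂ V] : Inj (Co (Xsh d) V) := by
  intro X Y i hi φ
  let l : ∀ m, X.obj (SS d m) →ₗ[ℂ] V := fun m => ev (Xsh d) (gg d m) ∘ₗ (φ.app (SS d m)).hom
  let Γ : Submodule ℂ ((∀ m, Y.obj (SS d m)) × V) :=
    { carrier := {p | ∀ᶠ m in atTop, ∃ x, i.app (SS d m) x = p.1 m ∧ l m x = p.2}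
      add_mem' := by
        intro p q hp hq
        filter_upwards [hp, hq] with m ⟨x, h1, h2⟩ ⟨y, h3, h4⟩
        exact ⟨x + y, by rw [map_add, h1, h3]; rfl, by rw [map_add, h2, h4]; rfl⟩
      zero_mem' := Eventually.of_forall fun m => ⟨0, by rw [map_zero]; rfl, by rw [map_zero]; rfl⟩
      smul_mem' := by
        intro c p hp
        filter_upwards [hp] with m ⟨x, h1, h2⟩
        exact ⟨c • x, by rw [map_smul, h1]; rfl, by rw [map_smul, h2]; rfl⟩ }
  obtain ⟨L, hL⟩ := graph_ext Γ (by
    intro v hv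
    obtain ⟨m, x, h1, h2⟩ := hv.exists
    have : x = 0 := hi _ (by rw [map_zero]; exact h1)
    rw [this, map_zero] at h2
    exact h2.symm)
  have hΓ : ∀ a b : (∀ m, Y.obj (SS d m)), (∀ᶠ m in atTop, a m = b m) → L a = L b := by
    intro a b hab
    have := hL (a - b, 0) (by
      change ∀ᶠ m in atTop, _
      filter_upwards [hab] with m hm
      exact ⟨0, by rw [map_zero]; change 0 = a m - b m; rw [hm, sub_self], map_zero _⟩)
    rw [← sub_eq_zero, ← map_sub]; exact this
  refine ⟨toCo (fun S f => L ∘ₗ th Y d f) ?_, hom_ext' fun S x => Co_ext fun f => ?_⟩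
  · intro S T j f y
    refine hΓ _ _ ?_
    filter_upwards [eventually_ge_atTop (Fintype.card T.α)] with m hm
    obtain ⟨k, hk⟩ := exists_hom f hm
    rw [th_apply Y f _ k hk, th_apply Y _ _ (j ≫ k) (by rw [(Xsh d).pull_comp, hk]), map_comp']
  · change L (th Y d f (i.app S x)) = _
    refine hL (th Y d f (i.app S x), ev _ f (φ.app S x)) ?_
    change ∀ᶠ m in atTop, _
    filter_upwards [eventually_ge_atTop (Fintype.card S.α)] with m hm
    obtain ⟨k, hk⟩ := exists_hom f hm
    refine ⟨av X d m (X.map k x), ?_, ?_⟩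
    · change _ = th Y d f (i.app S x) m
      rw [th_apply Y f _ k hk, av_nat, nat]
    · have : ∀ z, ∀ σ, l m (X.map (pm σ) z) = l m z := by
        intro z σ
        change ev _ _ (φ.app _ (X.map (pm σ) z)) = _
        rw [ev_nat, pull_pm]; rfl
      rw [av_inv X d m (l m) _ (this _)]
      change ev _ _ (φ.app _ (X.map k x)) = _
      rw [ev_nat, hk]

end FIR


namespace FIR

lemma FGd_span {M : FIMod} {D : ℕ} (hM : FGd M D) {V : Type} [AddCommGroup V] [Module ℂ V]
    (T : FIObj) (l : M.obj T →ₗ[ℂ] V)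
    (h : ∀ k < D, ∀ (g : FIObj.of (Fin k) ⟶ T) x, l (M.map g x) = 0) (y : M.obj T) : l y = 0 := by
  have h1 := hM.2 (spanSub fun S => {_x | ∃ k < D, S = FIObj.of (Fin k)})
    (fun k hk x => mem_spanSub _ ⟨k, hk, rfl⟩) T y
  have h2 : (spanSub fun S => {_x : M.obj S | ∃ k < D, S = FIObj.of (Fin k)}).carrier T
      ≤ LinearMap.ker l := by
    refine Submodule.span_le.2 ?_
    rintro _ ⟨S, f, x, ⟨k, hk, rfl⟩, rfl⟩
    exact h k hk f x
  exact h2 h1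

lemma fam_hom {M : FIMod} {d N : ℕ} (l : ∀ m, M.obj (SS d m) →ₗ[ℂ] ℂ)
    (hinv : ∀ m ≥ N, ∀ σ x, l m (M.map (pm σ) x) = l m x)
    (hcomp : ∀ m ≥ N, ∀ m' (h : m ≤ m') x, l m' (M.map (inc h) x) = l m x) :
    ∃ φ : M ⟶ Co (Xsh d) ℂ, ∀ m ≥ N, ∀ x, ev (Xsh d) (gg d m) (φ.app _ x) = l m x := by
  have key : ∀ {S : FIObj} (m m' : ℕ) (i : S ⟶ SS d m) (i' : S ⟶ SS d m'), N ≤ m → m ≤ m' →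
      (Xsh d).pull i (gg d m) = (Xsh d).pull i' (gg d m') → ∀ x : M.obj S,
      l m (M.map i x) = l m' (M.map i' x) := by
    intro S m m' i i' hm hm' h x
    obtain ⟨σ, hσ⟩ := exists_pm (i ≫ inc hm') i' (by rw [(Xsh d).pull_comp, pull_inc, h])
    rw [← hσ, ← map_comp', ← map_comp', hinv m' (hm.trans hm'), hcomp m hm]
  have key2 : ∀ {S : FIObj} (m m' : ℕ) (i : S ⟶ SS d m) (i' : S ⟶ SS d m'), N ≤ m → N ≤ m' →
      (Xsh d).pull i (gg d m) = (Xsh d).pull i' (gg d m') → ∀ x : M.obj S,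
      l m (M.map i x) = l m' (M.map i' x) := by
    intro S m m' i i' hm hm' h x
    rcases le_total m m' with h' | h'
    · exact key m m' i i' hm h' h x
    · exact (key m' m i' i hm' h' h.symm x).symm
  choose j hj using fun (S : FIObj) (f : (Xsh d).H S) =>
    exists_hom f (le_max_right N (Fintype.card S.α))
  refine ⟨toCo (fun S f => l _ ∘ₗ (M.map (j S f)).hom) ?_, ?_⟩
  · intro S T i f x
    change l _ (M.map (j T f) (M.map i x)) = l _ (M.map (j S ((Xsh d).pull i f)) x)
    rw [map_comp']
    refine key2 _ _ _ _ (le_max_left _ _) (le_max_left _ _) ?_ x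
    rw [(Xsh d).pull_comp, hj, hj]
  · intro m hm x
    change l _ (M.map (j _ (gg d m)) x) = l m x
    have := key2 m _ (𝟙 _) (j _ (gg d m)) hm (le_max_left _ _)
      (by rw [hj, (Xsh d).pull_id]) x
    rw [← this, map_id']

/-- invariant functionals -/
def LL (M : FIMod) (d m : ℕ) : Submodule ℂ (M.obj (SS d m) →ₗ[ℂ] ℂ) where
  carrier := {l | ∀ σ x, l (M.map (pm σ) x) = l x}
  add_mem' := by
    intro a b ha hb σ x
    rw [LinearMap.add_apply, LinearMap.add_apply, ha σ x, hb σ x]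
  zero_mem' := by intro σ x; rfl
  smul_mem' := by
    intro c a ha σ x
    rw [LinearMap.smul_apply, LinearMap.smul_apply, ha σ x]

def rr (M : FIMod) (d : ℕ) {m m' : ℕ} (h : m ≤ m') : LL M d m' →ₗ[ℂ] LL M d m where
  toFun l := ⟨l.1 ∘ₗ (M.map (inc h)).hom, by
    intro σ x
    change l.1 (M.map (inc h) (M.map (pm σ) x)) = l.1 (M.map (inc h) x)
    obtain ⟨τ, hτ⟩ := exists_pm (inc h) (pm σ ≫ inc h) (by
      rw [(Xsh d).pull_comp, pull_inc, pull_pm])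
    rw [map_comp', ← hτ, ← map_comp', l.2]⟩
  map_add' a b := rfl
  map_smul' c a := rfl

lemma rr_inj {M : FIMod} {d : ℕ} (hM : FGd M d) {m m' : ℕ} (h : m ≤ m') (hm : d ≤ m) :
    Function.Injective (rr M d h) := by
  rw [← LinearMap.ker_eq_bot, eq_bot_iff]
  intro l hl
  have hl' : ∀ x, l.1 (M.map (inc h) x) = 0 := fun x =>
    LinearMap.congr_fun (congrArg Subtype.val hl) x
  refine Subtype.ext (LinearMap.ext fun y => ?_)
  refine FGd_span hM _ l.1 ?_ y
  intro k hk g x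
  obtain ⟨i, hi⟩ := exists_hom ((Xsh d).pull g (gg d m')) (m := m)
    (by have : Fintype.card (FIObj.of (Fin k)).α = k := Fintype.card_fin k
        omega)
  obtain ⟨σ, hσ⟩ := exists_pm (i ≫ inc h) g (by rw [(Xsh d).pull_comp, pull_inc, hi])
  rw [← hσ, ← map_comp', ← map_comp', l.2, hl']

lemma exists_stable {M : FIMod} {d : ℕ} (hM : FGd M d) :
    ∃ N, ∀ m ≥ N, ∀ m' (h : m ≤ m'), Function.Bijective (rr M d h) := by
  have hfin := hM.1
  have hmono : ∀ m ≥ d, ∀ m' ≥ m, Module.finrank ℂ (LL M d m') ≤ Module.finrank ℂ (LL M d m) :=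
    fun m hm m' h => LinearMap.finrank_le_finrank_of_injective (rr_inj hM h hm)
  obtain ⟨N, hN⟩ : ∃ N, ∀ m ≥ N, Module.finrank ℂ (LL M d (d + m)) =
      Module.finrank ℂ (LL M d (d + N)) := by
    let a : ℕ →o ℕᵒᵈ := ⟨fun m => OrderDual.toDual (Module.finrank ℂ (LL M d (d + m))),
      fun m m' h => hmono _ (by omega) _ (by omega)⟩
    obtain ⟨N, hN⟩ := WellFoundedGT.monotone_chain_condition a
    exact ⟨N, fun m hm => (hN m hm).symm⟩
  refine ⟨d + N, fun m hm m' h => ?_⟩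
  have e1 := hN (m - d) (by omega)
  have e2 := hN (m' - d) (by omega)
  rw [show d + (m - d) = m by omega] at e1
  rw [show d + (m' - d) = m' by omega] at e2
  have hi := rr_inj hM h (by omega)
  exact ⟨hi, (LinearMap.injective_iff_surjective_of_finrank_eq_finrank (e2.trans e1.symm)).1 hi⟩

lemma exists_ext {M : FIMod} {d : ℕ} (hM : FGd M d) :
    ∃ N, ∀ m ≥ N, ∀ l ∈ LL M d m, ∃ φ : M ⟶ Co (Xsh d) ℂ,
      ∀ x, ev (Xsh d) (gg d m) (φ.app _ x) = l x := by
  obtain ⟨N, hN⟩ := exists_stable hM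
  refine ⟨N, fun m hm l hl => ?_⟩
  choose u hu using fun (m' : ℕ) (h : m ≤ m') => (hN m hm m' h).2 ⟨l, hl⟩
  have hrr : ∀ m' (h : m ≤ m') m'' (h' : m' ≤ m''), rr M d h' (u m'' (h.trans h')) = u m' h := by
    intro m' h m'' h'
    apply (hN m hm m' h).1
    rw [hu, ← hu m'' (h.trans h')]
    refine Subtype.ext (LinearMap.ext fun x => ?_)
    change (u m'' _).1 (M.map (inc h') (M.map (inc h) x)) = (u m'' _).1 (M.map _ x)
    rw [map_comp']
    congr 3
    refine congrArg M.map (Subtype.ext (funext fun s : Fin d ⊕ Fin m => ?_))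
    rcases s with s | s <;> rfl
  obtain ⟨φ, hφ⟩ := fam_hom (N := m) (M := M) (d := d)
    (fun m' => if h : m ≤ m' then (u m' h).1 else 0)
    (by
      intro m' h σ x
      rw [dif_pos h]; exact (u m' h).2 σ x)
    (by
      intro m' h m'' h' x
      rw [dif_pos h, dif_pos (h.trans h'), ← hrr m' h m'' h']; rfl)
  refine ⟨φ, fun x => ?_⟩
  rw [hφ m le_rfl, dif_pos le_rfl]
  have := hu m le_rfl
  have h3 := LinearMap.congr_fun (congrArg Subtype.val this) x
  refine Eq.trans ?_ h3
  change _ = (u m le_rfl).1 (M.map (inc le_rfl) x)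
  have : inc (d := d) (le_refl m) = 𝟙 _ := Subtype.ext (funext fun s : Fin d ⊕ Fin m => by
    rcases s with s | s <;> rfl)
  rw [this, map_id']

/-- Maschke -/
lemma exists_proj {M : FIMod} (T : FISub M) (S : FIObj) : ∃ π : M.obj S →ₗ[ℂ] M.obj S,
    (∀ x, π x ∈ T.carrier S) ∧ (∀ x ∈ T.carrier S, π x = x) ∧
    ∀ (σ : Equiv.Perm S.α) x, π (M.map (isoHom σ) x) = M.map (isoHom σ) (π x) := by
  classical
  obtain ⟨p0, hp0⟩ := (T.carrier S).subtype.exists_leftInverse_of_injective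
    (LinearMap.ker_eq_bot.2 Subtype.val_injective)
  let p : M.obj S →ₗ[ℂ] M.obj S := (T.carrier S).subtype ∘ₗ p0
  have hp1 : ∀ x, p x ∈ T.carrier S := fun x => (p0 x).2
  have hp2 : ∀ x ∈ T.carrier S, p x = x := fun x hx =>
    congrArg Subtype.val (LinearMap.congr_fun hp0 ⟨x, hx⟩)
  let A : Equiv.Perm S.α → (M.obj S →ₗ[ℂ] M.obj S) := fun σ => (M.map (isoHom σ)).hom
  have hA : ∀ σ τ x, A (σ * τ) x = A σ (A τ x) := fun σ τ x =>
    (map_comp' M (isoHom τ) (isoHom σ) x).symm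
  have hA1 : ∀ x, A 1 x = x := fun x => map_id' M x
  let π : M.obj S →ₗ[ℂ] M.obj S :=
    (Fintype.card (Equiv.Perm S.α) : ℂ)⁻¹ • ∑ σ, A σ ∘ₗ p ∘ₗ A σ⁻¹
  have hπ : ∀ x, π x = (Fintype.card (Equiv.Perm S.α) : ℂ)⁻¹ • ∑ σ, A σ (p (A σ⁻¹ x)) := by
    intro x
    simp only [π, LinearMap.smul_apply, LinearMap.sum_apply, LinearMap.comp_apply]
  refine ⟨π, fun x => ?_, fun x hx => ?_, fun τ x => ?_⟩
  · rw [hπ]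
    exact Submodule.smul_mem _ _ (sum_mem fun σ _ => T.map_mem _ _ (hp1 _))
  · rw [hπ]
    have : ∀ σ ∈ Finset.univ, A σ (p (A σ⁻¹ x)) = x := by
      intro σ _
      rw [hp2 _ (T.map_mem _ _ hx), ← hA, mul_inv_cancel, hA1]
    rw [Finset.sum_congr rfl this, Finset.sum_const, Finset.card_univ, ← Nat.cast_smul_eq_nsmul ℂ,
      smul_smul, inv_mul_cancel₀, one_smul]
    exact Nat.cast_ne_zero.2 Fintype.card_ne_zero
  · change π (A τ x) = A τ (π x)
    rw [hπ, hπ, map_smul, map_sum]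
    congr 1
    rw [← Equiv.sum_comp (Equiv.mulLeft τ)]
    refine Finset.sum_congr rfl fun σ _ => ?_
    rw [Equiv.coe_mulLeft, hA, mul_inv_rev, hA, ← hA τ⁻¹ τ, inv_mul_cancel, hA1]

lemma kernel_bdd {M : FIMod} {d : ℕ} (hM : FGd M d) : ∃ N, ∀ T : FISub M,
    (∀ (φ : M ⟶ Co (Xsh d) ℂ) S, ∀ x ∈ T.carrier S, φ.app S x = 0) →
    ∀ S : FIObj, N ≤ Fintype.card S.α → ∀ x ∈ T.carrier S, x = 0 := by
  obtain ⟨N, hN⟩ := exists_ext hM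
  refine ⟨N + d, fun T hT S hS x hx => ?_⟩
  obtain ⟨m, hm⟩ : ∃ m, Fintype.card S.α = d + m := ⟨Fintype.card S.α - d, by omega⟩
  let e : S.α ≃ (SS d m).α := (Fintype.equivFinOfCardEq hm).trans finSumFinEquiv.symm
  have hinj : ∀ y : M.obj S, M.map (isoHom e) y = 0 → y = 0 := by
    intro y hy
    have := congrArg (M.map (isoHom e.symm)) hy
    rwa [map_comp', isoHom_symm, map_id', map_zero] at this
  apply hinj
  have ht := T.map_mem (isoHom e) x hx
  generalize M.map (isoHom e) x = t at ht
  obtain ⟨π, h1, h2, h3⟩ := exists_proj T (SS d m)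
  rw [← h2 t ht]
  refine FGd_span hM _ π ?_ t
  intro k hk g z
  let h' : FIObj.of (Fin k) ⟶ SS d m := ⟨fun s : Fin k => (Sum.inl (Fin.castLE hk.le s) : Fin d ⊕ Fin m),
    Sum.inl_injective.comp (Fin.castLE_injective _)⟩
  obtain ⟨τ, hτ⟩ := exists_perm h'.1 g.1 h'.2 g.2
  have e1 : g = h' ≫ isoHom τ := Subtype.ext (funext fun s => (hτ s).symm)
  rw [e1, ← map_comp', h3]
  suffices π (M.map h' z) = 0 by rw [this, map_zero]
  have hinv : ∀ σ, M.map (pm σ) (π (M.map h' z)) = π (M.map h' z) := by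
    intro σ
    let q : Equiv.Perm (SS d m).α := Equiv.sumCongr (Equiv.refl (Fin d)) σ
    have e2 : pm (d := d) σ = isoHom q :=
      Subtype.ext (funext fun s : Fin d ⊕ Fin m => by rcases s with s | s <;> rfl)
    have e3 : h' ≫ pm σ = h' := rfl
    conv_rhs => rw [← e3, ← map_comp', e2, h3]
    rw [e2]
  have hmem := h1 (M.map h' z)
  generalize π (M.map h' z) = t' at hinv hmem
  rw [← Module.forall_dual_apply_eq_zero_iff ℂ]
  intro l0
  obtain ⟨φ, hφ⟩ := hN m (by omega) (l0 ∘ₗ av M d m) (by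
    intro σ x
    exact congrArg l0 (av_pm M d m σ x))
  have h4 := hφ t'
  rw [hT φ _ t' hmem, map_zero] at h4
  rw [← av_inv M d m l0 t' (fun σ => by rw [hinv])]
  exact h4.symm

end FIR


namespace FIR

lemma X_ext {d : ℕ} {S : FIObj} {f g : (Xsh d).H S} (h : ∀ s, f.1 s = g.1 s) : f = g :=
  Subtype.ext (funext h)

/-- restriction of a partial injection -/
def res {d : ℕ} (b : Finset (Fin d)) {S : FIObj} (f : (Xsh d).H S) : (Xsh d).H S :=
  ⟨fun s => (f.1 s).filter (fun j => decide (j ∈ b)), by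
    intro s t h h'
    rcases hs : f.1 s with _ | j
    · simp [hs] at h'
    · rcases ht : f.1 t with _ | j'
      · simp [hs, ht, Option.filter] at h h'
        exact absurd h' (by simpa using h)
      · have : j = j' := by
          simp only [hs, ht, Option.filter] at h h'
          split_ifs at h h' <;> simp_all
        exact f.2 s t (by rw [hs, ht, this]) (by simp [hs])⟩

lemma res_pull {d : ℕ} (b : Finset (Fin d)) {S T : FIObj} (i : S ⟶ T) (f : (Xsh d).H T) :
    (Xsh d).pull i (res b f) = res b ((Xsh d).pull i f) := rfl

lemma res_univ {d : ℕ} {S : FIObj} (f : (Xsh d).H S) : res Finset.univ f = f :=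
  X_ext fun s => by
    change (f.1 s).filter _ = f.1 s
    rcases f.1 s with _ | j <;> simp

lemma res_symmDiff {d : ℕ} (b b' : Finset (Fin d)) {S : FIObj} (f : (Xsh d).H S) (j : Fin d)
    (hj : ∀ s, f.1 s ≠ some j) (h : ∀ k, k ≠ j → (k ∈ b ↔ k ∈ b')) : res b f = res b' f :=
  X_ext fun s => by
    change (f.1 s).filter _ = (f.1 s).filter _
    rcases hs : f.1 s with _ | k
    · rfl
    · have hk : k ≠ j := fun h => hj s (by rw [hs, h])
      simp only [Option.filter, h k hk]

lemma res_not_pred {d : ℕ} (b : Finset (Fin d)) (hb : b ≠ Finset.univ) {S : FIObj}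
    (f : (Xsh d).H S) : ¬ (Xsh d).pred (res b f) := by
  intro h
  apply hb
  rw [Finset.eq_univ_iff_forall]
  intro j
  obtain ⟨s, hs⟩ := h j
  change (f.1 s).filter _ = some j at hs
  have := Option.filter_eq_some_iff.1 hs
  simpa using this.2

open scoped Classical in
noncomputable def mob (d : ℕ) (V : Type) [AddCommGroup V] [Module ℂ V] :
    Co (Xsh d) V ⟶ Co (Xsh d) V :=
  toCo (fun S f => if (Xsh d).pred f then
    ∑ b : Finset (Fin d), ((-1 : ℂ) ^ bᶜ.card) • ev (Xsh d) (res b f) else 0) (by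
  intro S T i f x
  have hsum : ∀ {U : FIObj} (g : (Xsh d).H U) (y : (Co (Xsh d) V).obj U),
      (∑ b : Finset (Fin d), ((-1 : ℂ) ^ bᶜ.card) • ev (Xsh d) (res b g)) y =
      ∑ b : Finset (Fin d), ((-1 : ℂ) ^ bᶜ.card) • ev (Xsh d) (res b g) y := by
    intro U g y
    simp only [LinearMap.sum_apply, LinearMap.smul_apply]
  by_cases h : (Xsh d).pred ((Xsh d).pull i f)
  · rw [if_pos h, if_pos ((Xsh d).pred_pull i f h), hsum, hsum]
    refine Finset.sum_congr rfl fun b _ => ?_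
    rw [ev_map, res_pull]
  · rw [if_neg h, LinearMap.zero_apply]
    by_cases h' : (Xsh d).pred f
    · rw [if_pos h', hsum]
      obtain ⟨j, hj⟩ : ∃ j, ∀ s, ((Xsh d).pull i f).1 s ≠ some j := by
        by_contra hc; push Not at hc; exact h hc
      refine Finset.sum_involution (fun b _ => symmDiff b {j}) ?_ ?_ ?_ ?_
      · intro b _
        rw [ev_map, ev_map, res_pull, res_pull,
          res_symmDiff (symmDiff b {j}) b _ j hj
            (fun k hk => by simp [Finset.mem_symmDiff, hk]), ← add_smul]
        have : (-1 : ℂ) ^ bᶜ.card + (-1 : ℂ) ^ (symmDiff b {j})ᶜ.card = 0 := by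
          by_cases hjb : j ∈ b
          · have e : (symmDiff b {j})ᶜ = insert j bᶜ := by
              ext k
              by_cases hk : k = j
              · subst hk; simp [Finset.mem_symmDiff, hjb]
              · simp [Finset.mem_symmDiff, hk]
            rw [e, Finset.card_insert_of_notMem (by simpa using hjb), pow_succ]; ring
          · have e : bᶜ = insert j (symmDiff b {j})ᶜ := by
              ext k
              by_cases hk : k = j
              · subst hk; simp [hjb]
              · simp [Finset.mem_symmDiff, hk]
            rw [e, Finset.card_insert_of_notMem (by simp [Finset.mem_symmDiff, hjb]), pow_succ]; ring
        rw [this, zero_smul]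
      · intro b _ _ hb
        have := congrArg (fun c => j ∈ c) hb
        simp [Finset.mem_symmDiff] at this
      · intro b _; exact Finset.mem_univ _
      · intro b _; exact symmDiff_symmDiff_cancel_right _ _
    · rw [if_neg h', LinearMap.zero_apply])

/-- supported on total partial injections -/
def Tot {M : FIMod} {d : ℕ} {V : Type} [AddCommGroup V] [Module ℂ V] (φ : M ⟶ Co (Xsh d) V) : Prop :=
  ∀ S x (f : (Xsh d).H S), ¬ (Xsh d).pred f → ev (Xsh d) f (φ.app S x) = 0

lemma mob_tot (d : ℕ) (V : Type) [AddCommGroup V] [Module ℂ V] : Tot (mob d V) := by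
  intro S x f hf
  classical
  change (if (Xsh d).pred f then
    ∑ b : Finset (Fin d), ((-1 : ℂ) ^ bᶜ.card) • ev (Xsh d) (res b f) else 0) x = 0
  rw [if_neg hf]; rfl

lemma mob_id (d : ℕ) (V : Type) [AddCommGroup V] [Module ℂ V] (S : FIObj)
    (w : (Co (Xsh d) V).obj S) (h : ∀ f : (Xsh d).H S, ¬ (Xsh d).pred f → ev (Xsh d) f w = 0) :
    (mob d V).app S w = w := by
  refine Co_ext fun f => ?_
  classical
  change (if (Xsh d).pred f then
    ∑ b : Finset (Fin d), ((-1 : ℂ) ^ bᶜ.card) • ev (Xsh d) (res b f) else 0) w = _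
  by_cases hf : (Xsh d).pred f
  · rw [if_pos hf]
    simp only [LinearMap.sum_apply, LinearMap.smul_apply]
    rw [Finset.sum_eq_single Finset.univ]
    · simp [res_univ]
    · intro b _ hb
      rw [h _ (res_not_pred b hb f), smul_zero]
    · simp
  · rw [if_neg hf, h f hf]; rfl

lemma Tot_ext {X Y : FIMod} {d : ℕ} (i : X ⟶ Y) (hi : ∀ S, Function.Injective (i.app S))
    (φ : X ⟶ Co (Xsh d) ℂ) (hφ : Tot φ) : ∃ ψ : Y ⟶ Co (Xsh d) ℂ, Tot ψ ∧ i ≫ ψ = φ := by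
  obtain ⟨g, hg⟩ := Inj_X d ℂ X Y i hi φ
  refine ⟨g ≫ mob d ℂ, fun S x f hf => mob_tot d ℂ S _ f hf, hom_ext' fun S x => ?_⟩
  change (mob d ℂ).app S ((i ≫ g).app S x) = _
  rw [hg, mob_id d ℂ S _ (hφ S x)]

section PM
variable {d : ℕ} {W : Type} [AddCommGroup W] [Module ℂ W]
  (ρ : Representation ℂ (Equiv.Perm (Fin d)) W)

abbrev PM : FIMod := eMod ρ (Xsh d)

lemma Inj_PM : Inj (PM ρ) := Inj_eMod ρ (Inj_X d W) (mob d W) (mob_tot d W) (mob_id d W)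

def idX (d : ℕ) : (Xsh d).H (FIObj.of (Fin d)) := ⟨some, fun _ _ h _ => Option.some_injective _ h⟩

lemma idX_pred (d : ℕ) : (Xsh d).pred (idX d) := fun j => ⟨j, rfl⟩

lemma exists_sec {S : FIObj} (f : (Xsh d).H S) (hf : (Xsh d).pred f) :
    ∃ i : FIObj.of (Fin d) ⟶ S, ∀ h, (Xsh d).pull i h = idX d ↔ h = f := by
  choose i hi using hf
  have hinj : Function.Injective i := fun a b hab => by
    have := hi a
    rw [hab, hi b] at this
    exact (Option.some_injective _ this).symm
  have hpull : ∀ h : (Xsh d).H S, (Xsh d).pull ⟨i, hinj⟩ h = idX d ↔ ∀ j, h.1 (i j) = some j :=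
    fun h => ⟨fun e j => congrFun (congrArg Subtype.val e) j, fun e => X_ext e⟩
  refine ⟨⟨i, hinj⟩, fun h => ?_⟩
  rw [hpull]
  refine ⟨fun e => X_ext fun s => ?_, fun e => e ▸ hi⟩
  have key : ∀ g g' : (Xsh d).H S, (∀ j, g.1 (i j) = some j) → (∀ j, g'.1 (i j) = some j) →
      ∀ j, g.1 s = some j → g'.1 s = some j := by
    intro g g' h1 h2 j hj
    have := g.2 s (i j) (by rw [hj, h1]) (by simp [hj])
    rw [this, h2]
  rcases hs : f.1 s with _ | j
  · rcases hs' : h.1 s with _ | j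
    · rfl
    · rw [key h f e hi j hs'] at hs; cases hs
  · exact key f h hi e j hs

lemma FGd_PM [Module.Finite ℂ W] : FGd (PM ρ) (d + 1) := by
  classical
  refine ⟨fun S => eMod_fin ρ S, fun N hN S y => ?_⟩
  have := (Xsh d).fin S
  have := Fintype.ofFinite {f : (Xsh d).H S // (Xsh d).pred f}
  choose i hi using fun f : {f : (Xsh d).H S // (Xsh d).pred f} => exists_sec f.1 f.2
  let δ : W → (Co (Xsh d) W).obj (FIObj.of (Fin d)) := fun v =>
    (Pi.single (idX d) v : (Xsh d).H (FIObj.of (Fin d)) → W)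
  have hδ : ∀ v h, ev (Xsh d) h (δ v) = if h = idX d then v else 0 := fun v h => by
    change (Pi.single (idX d) v : (Xsh d).H (FIObj.of (Fin d)) → W) h = _
    rw [Pi.single_apply]
  have hmem : ∀ v, (avg ρ).app _ (δ v) ∈ (eSub ρ (Xsh d)).carrier _ := fun v =>
    avg_mem ρ _ fun f hf => by
      rw [hδ, if_neg]; rintro rfl; exact hf (idX_pred d)
  let w := (sIncl (eSub ρ (Xsh d))).app S y
  have hw : w ∈ (eSub ρ (Xsh d)).carrier S := sIncl_mem _ y
  have e1 : w = ∑ f : {f : (Xsh d).H S // (Xsh d).pred f},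
      (Co (Xsh d) W).map (i f) (δ (ev (Xsh d) f.1 w)) := by
    refine Co_ext fun h => ?_
    rw [map_sum]
    simp only [ev_map, hδ, hi]
    by_cases hh : (Xsh d).pred h
    · rw [Finset.sum_eq_single ⟨h, hh⟩]
      · rw [if_pos rfl]
      · intro f _ hf
        rw [if_neg]; intro e; exact hf (Subtype.ext e.symm)
      · simp
    · rw [hw.1 h hh, Finset.sum_eq_zero]
      intro f _
      rw [if_neg]; rintro rfl; exact hh f.2
  have e2 : y = ∑ f : {f : (Xsh d).H S // (Xsh d).pred f},
      (PM ρ).map (i f) (sElt _ _ (hmem (ev (Xsh d) f.1 w))) := by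
    apply sIncl_inj
    change w = _
    rw [map_sum]
    conv_lhs => rw [← avg_id ρ w hw, e1, map_sum]
    refine Finset.sum_congr rfl fun f _ => ?_
    rw [nat, nat, sIncl_sElt]
  rw [e2]
  exact sum_mem fun f _ => N.map_mem _ _ (hN d (by omega) _)

lemma X_pred_card {S : FIObj} {f : (Xsh d).H S} (hf : (Xsh d).pred f) : d ≤ Fintype.card S.α := by
  obtain ⟨i, _⟩ := exists_sec f hf
  have := Fintype.card_le_of_injective i.1 i.2
  rwa [show Fintype.card (FIObj.of (Fin d)).α = d from Fintype.card_fin d] at this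

lemma X_pred_perm {f : (Xsh d).H (FIObj.of (Fin d))} (hf : (Xsh d).pred f) :
    ∃ τ : Equiv.Perm (Fin d), f = (Xsh d).act τ (idX d) ∧ f = (Xsh d).pull (permHom τ) (idX d) := by
  choose i hi using hf
  have hi' : ∀ j : Fin d, f.1 (i j : Fin d) = some j := hi
  have hinj : Function.Injective (i : Fin d → Fin d) := fun a b hab => by
    have := hi' a
    rw [hab, hi' b] at this
    exact (Option.some_injective _ this).symm
  let e : Equiv.Perm (Fin d) := Equiv.ofBijective i (Finite.injective_iff_bijective.1 hinj)
  have : ∀ s : Fin d, f.1 s = some (e.symm s) := by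
    intro s
    have := hi' (e.symm s)
    rwa [show i (e.symm s) = s from e.apply_symm_apply s] at this
  exact ⟨e.symm, X_ext this, X_ext this⟩

lemma PM_formula [Module.Finite ℂ W] (ψ : PM ρ ⟶ Co (Xsh d) ℂ) (hψ : Tot ψ) :
    ∃ φ0 : W →ₗ[ℂ] ℂ, ∀ S (w : (PM ρ).obj S) (f : (Xsh d).H S),
      ev (Xsh d) f (ψ.app S w) = φ0 (ev (Xsh d) f ((sIncl _).app S w)) := by
  let K := FIObj.of (Fin d)
  let l : (PM ρ).obj K →ₗ[ℂ] W := ev (Xsh d) (idX d) ∘ₗ ((sIncl (eSub ρ (Xsh d))).app K).hom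
  have hl : Function.Injective l := by
    rw [← LinearMap.ker_eq_bot, eq_bot_iff]
    intro w hw
    apply sIncl_inj
    refine Co_ext fun f => ?_
    rw [map_zero, map_zero]
    by_cases hf : (Xsh d).pred f
    · obtain ⟨τ, rfl, _⟩ := X_pred_perm hf
      rw [(sIncl_mem _ w).2]
      have : ev (Xsh d) (idX d) ((sIncl (eSub ρ (Xsh d))).app K w) = 0 := hw
      rw [this, map_zero]
    · exact (sIncl_mem _ w).1 f hf
  obtain ⟨φ0, h0⟩ := ext_lin l hl (ev (Xsh d) (idX d) ∘ₗ (ψ.app K).hom)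
  refine ⟨φ0, ?_⟩
  have h0' : ∀ x, φ0 (ev (Xsh d) (idX d) ((sIncl (eSub ρ (Xsh d))).app K x)) =
    ev (Xsh d) (idX d) (ψ.app K x) := h0
  let a : PM ρ ⟶ Co (Xsh d) ℂ := toCo (fun S f => φ0 ∘ₗ ev (Xsh d) f ∘ₗ ((sIncl (eSub ρ (Xsh d))).app S).hom)
    (by
      intro S T i f x
      exact congrArg φ0 (ev_nat (sIncl (eSub ρ (Xsh d))) i f x))
  have ha : ∀ S (x : (PM ρ).obj S) f, ev (Xsh d) f (a.app S x) =
    φ0 (ev (Xsh d) f ((sIncl (eSub ρ (Xsh d))).app S x)) := fun _ _ _ => rfl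
  have key : ψ = a := by
    refine FGd_hom_ext (FGd_PM ρ) fun k hk x => Co_ext fun f => ?_
    rw [ha]
    by_cases hf : (Xsh d).pred f
    · have h1 := X_pred_card hf
      rw [show Fintype.card (FIObj.of (Fin k)).α = k from Fintype.card_fin k] at h1
      obtain rfl : k = d := by omega
      obtain ⟨τ, _, rfl⟩ := X_pred_perm hf
      rw [← ev_nat ψ, ← ev_nat (sIncl (eSub ρ (Xsh k))), h0']
    · rw [hψ _ x f hf, (sIncl_mem _ x).1 f hf, map_zero]
  intro S w f
  rw [key, ha]

end PM

end FIR


namespace FIR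

lemma exists_theta {M : FIMod} {D : ℕ} (hM : FGd M D) (k : ℕ) :
    ∃ (P : FIMod) (θ : M ⟶ P), FGd P (k + 1) ∧ Inj P ∧
      (∀ S x, θ.app S x = 0 → ∀ φ : M ⟶ Co (Xsh k) ℂ, Tot φ → φ.app S x = 0) ∧
      (∀ ψ : P ⟶ Co (Xsh k) ℂ, Tot ψ → (∀ S x, ψ.app S (θ.app S x) = 0) →
        ∀ S w, ψ.app S w = 0) := by
  have hfin := hM.1
  let V := ∀ j : Fin D, M.obj (FIObj.of (Fin j)) →ₗ[ℂ] (Co (Xsh k) ℂ).obj (FIObj.of (Fin j))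
  let L : Submodule ℂ V :=
    { carrier := {a | ∃ φ : M ⟶ Co (Xsh k) ℂ, Tot φ ∧ ∀ j x, a j x = φ.app _ x}
      add_mem' := by
        rintro a b ⟨φ, h1, h2⟩ ⟨ψ, h3, h4⟩
        refine ⟨toCo (fun S f => ev (Xsh k) f ∘ₗ (φ.app S).hom + ev (Xsh k) f ∘ₗ (ψ.app S).hom) ?_,
          ?_, ?_⟩
        · intro S T i f x
          exact congrArg₂ (· + ·) (ev_nat φ i f x) (ev_nat ψ i f x)
        · intro S x f hf
          have := congrArg₂ (· + ·) (h1 S x f hf) (h3 S x f hf)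
          rw [add_zero] at this
          exact this
        · intro j x
          refine Co_ext fun f => ?_
          change ev (Xsh k) f (a j x + b j x) = ev (Xsh k) f (φ.app _ x) + ev (Xsh k) f (ψ.app _ x)
          rw [map_add, h2, h4]
      zero_mem' := ⟨toCo (fun S f => 0) (fun _ _ _ => rfl), fun S x f hf => rfl, fun j x => rfl⟩
      smul_mem' := by
        rintro c a ⟨φ, h1, h2⟩
        refine ⟨toCo (fun S f => c • (ev (Xsh k) f ∘ₗ (φ.app S).hom)) ?_, ?_, ?_⟩
        · intro S T i f x
          exact congrArg (c • ·) (ev_nat φ i f x)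
        · intro S x f hf
          have := congrArg (c • ·) (h1 S x f hf)
          rw [smul_zero] at this
          exact this
        · intro j x
          refine Co_ext fun f => ?_
          change ev (Xsh k) f (c • a j x) = c • ev (Xsh k) f (φ.app _ x)
          rw [map_smul, h2] }
  have : Module.Finite ℂ V := by infer_instance
  choose Φ hΦ1 hΦ2 using fun a : L => a.2
  have uniq : ∀ (a : L) (φ : M ⟶ Co (Xsh k) ℂ), (∀ j x, a.1 j x = φ.app _ x) → Φ a = φ := by
    intro a φ h
    refine FGd_hom_ext hM fun j hj x => ?_
    rw [← hΦ2 a ⟨j, hj⟩ x, h]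
  have hadd : ∀ (a b : L) S x (f : (Xsh k).H S), ev (Xsh k) f ((Φ (a + b)).app S x) =
      ev (Xsh k) f ((Φ a).app S x) + ev (Xsh k) f ((Φ b).app S x) := by
    intro a b S x f
    rw [uniq (a + b) (toCo (fun S f => ev (Xsh k) f ∘ₗ ((Φ a).app S).hom +
      ev (Xsh k) f ∘ₗ ((Φ b).app S).hom) (fun i f x =>
        congrArg₂ (· + ·) (ev_nat (Φ a) i f x) (ev_nat (Φ b) i f x)))]
    · rfl
    · intro j x
      refine Co_ext fun f => ?_
      change ev (Xsh k) f (a.1 j x + b.1 j x) =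
        ev (Xsh k) f ((Φ a).app _ x) + ev (Xsh k) f ((Φ b).app _ x)
      rw [map_add, hΦ2, hΦ2]
  have hsmul : ∀ (c : ℂ) (a : L) S x (f : (Xsh k).H S), ev (Xsh k) f ((Φ (c • a)).app S x) =
      c • ev (Xsh k) f ((Φ a).app S x) := by
    intro c a S x f
    rw [uniq (c • a) (toCo (fun S f => c • (ev (Xsh k) f ∘ₗ ((Φ a).app S).hom)) (fun i f x =>
        congrArg (c • ·) (ev_nat (Φ a) i f x)))]
    · rfl
    · intro j x
      refine Co_ext fun f => ?_
      change ev (Xsh k) f (c • a.1 j x) = c • ev (Xsh k) f ((Φ a).app _ x)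
      rw [map_smul, hΦ2]
  let Ac : Equiv.Perm (Fin k) → (Co (Xsh k) ℂ ⟶ Co (Xsh k) ℂ) := fun σ =>
    toCo (fun S f => ev (Xsh k) ((Xsh k).act σ⁻¹ f)) (fun i f x => by
      rw [ev_map, (Xsh k).act_pull])
  have hAc : ∀ σ S w (f : (Xsh k).H S), ev (Xsh k) f ((Ac σ).app S w) =
    ev (Xsh k) ((Xsh k).act σ⁻¹ f) w := fun _ _ _ _ => rfl
  have hAL : ∀ σ (a : L), (fun j => ((Ac σ).app _).hom ∘ₗ a.1 j : V) ∈ L := by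
    intro σ a
    refine ⟨Φ a ≫ Ac σ, ?_, ?_⟩
    · intro S x f hf
      change ev (Xsh k) f ((Ac σ).app S ((Φ a).app S x)) = 0
      rw [hAc]
      exact hΦ1 a S x _ fun h => hf ((Xsh k).pred_act _ _ h)
    · intro j x
      exact congrArg ((Ac σ).app (FIObj.of (Fin j))) (hΦ2 a j x)
  let ρ : Representation ℂ (Equiv.Perm (Fin k)) L :=
    { toFun := fun σ =>
        { toFun := fun a => ⟨_, hAL σ a⟩
          map_add' := fun a b => Subtype.ext (funext fun j => LinearMap.comp_add _ _ _)
          map_smul' := fun c a => Subtype.ext (funext fun j => LinearMap.comp_smul _ _ _) }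
      map_one' := by
        refine LinearMap.ext fun a => Subtype.ext (funext fun j => LinearMap.ext fun x => ?_)
        refine Co_ext fun f => ?_
        change ev (Xsh k) ((Xsh k).act 1⁻¹ f) (a.1 j x) = _
        rw [inv_one, (Xsh k).act_one]; rfl
      map_mul' := by
        intro σ τ
        refine LinearMap.ext fun a => Subtype.ext (funext fun j => LinearMap.ext fun x => ?_)
        refine Co_ext fun f => ?_
        change ev (Xsh k) ((Xsh k).act (σ * τ)⁻¹ f) (a.1 j x) =
          ev (Xsh k) ((Xsh k).act τ⁻¹ ((Xsh k).act σ⁻¹ f)) (a.1 j x)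
        rw [mul_inv_rev, (Xsh k).act_mul] }
  have hρ : ∀ σ a, Φ (ρ σ a) = Φ a ≫ Ac σ := by
    intro σ a
    refine uniq _ _ fun j x => ?_
    exact congrArg ((Ac σ).app (FIObj.of (Fin j))) (hΦ2 a j x)
  let W := Module.Dual ℂ L
  let t : M ⟶ Co (Xsh k) W := toCo (fun S f => LinearMap.mk₂ ℂ
      (fun x a => ev (Xsh k) f ((Φ a).app S x))
      (fun x y a => by rw [map_add, map_add]) (fun c x a => by rw [map_smul, map_smul])
      (fun x a b => hadd a b S x f) (fun c x a => hsmul c a S x f))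
    (fun i f x => LinearMap.ext fun a => ev_nat (Φ a) i f x)
  have ht : ∀ S x (f : (Xsh k).H S) a, ev (Xsh k) f (t.app S x) a = ev (Xsh k) f ((Φ a).app S x) :=
    fun _ _ _ _ => rfl
  have htm : ∀ S x, t.app S x ∈ (eSub ρ.dual (Xsh k)).carrier S := by
    intro S x
    refine ⟨fun f hf => LinearMap.ext fun a => ?_, fun σ f => LinearMap.ext fun a => ?_⟩
    · rw [ht]; exact hΦ1 a S x f hf
    · rw [ht]
      change _ = ev (Xsh k) f (t.app S x) (ρ σ⁻¹ a)
      rw [ht, hρ]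
      change _ = ev (Xsh k) f ((Ac σ⁻¹).app S ((Φ a).app S x))
      rw [hAc, inv_inv]
  refine ⟨PM ρ.dual, sLift _ t htm, FGd_PM _, Inj_PM _, ?_, ?_⟩
  · intro S x hx φ hφ
    have hx' : t.app S x = 0 := congrArg ((sIncl _).app S) hx
    let a : L := ⟨fun j => (φ.app _).hom, φ, hφ, fun j x => rfl⟩
    rw [← uniq a φ fun j x => rfl]
    refine Co_ext fun f => ?_
    rw [← ht, hx', map_zero, map_zero]; rfl
  · intro ψ hψ h0
    obtain ⟨φ0, hφ0⟩ := PM_formula ρ.dual ψ hψ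
    obtain ⟨a, rfl⟩ := (Module.bijective_dual_eval ℂ L).2 φ0
    have h1 : ∀ S x, (Φ a).app S x = 0 := by
      intro S x
      refine Co_ext fun f => ?_
      have := hφ0 S ((sLift _ t htm).app S x) f
      rw [h0, map_zero] at this
      rw [map_zero]
      exact this.symm
    have h2 : a = 0 := Subtype.ext (funext fun j => LinearMap.ext fun x => by
      rw [hΦ2, h1]; rfl)
    intro S w
    refine Co_ext fun f => ?_
    rw [hφ0, h2, map_zero, map_zero]; rfl

def Small (d : ℕ) (M : FIMod) : Prop :=
  ∀ k ≥ d, ∀ φ : M ⟶ Co (Xsh k) ℂ, Tot φ → ∀ S x, φ.app S x = 0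

lemma Small_of_FGd {M : FIMod} {d : ℕ} (h : FGd M d) : Small d M := by
  intro k hk φ hφ S x
  rw [FGd_hom_ext (φ := φ) (ψ := 0) h ?_]
  · rfl
  · intro j hj x
    refine Co_ext fun f => ?_
    rw [hφ _ x f]
    · rfl
    · intro hf
      have := X_pred_card hf
      rw [show Fintype.card (FIObj.of (Fin j)).α = j from Fintype.card_fin j] at this
      omega

def up {k : ℕ} (j : Fin (k + 1)) {S : FIObj} (f : (Xsh k).H S) : (Xsh (k + 1)).H S :=
  ⟨fun s => (f.1 s).map j.succAbove, fun s t h h' =>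
    f.2 s t (Option.map_injective Fin.succAbove_right_injective h) (fun h0 => h' (by simp [h0]))⟩

lemma exists_up {k : ℕ} (j : Fin (k + 1)) {S : FIObj} (f : (Xsh (k + 1)).H S)
    (hj : ∀ s, f.1 s ≠ some j) : ∃ f', up j f' = f := by
  have : ∀ s, ∃ o : Option (Fin k), o.map j.succAbove = f.1 s := by
    intro s
    rcases hs : f.1 s with _ | i
    · exact ⟨none, rfl⟩
    · obtain ⟨z, hz⟩ := Fin.exists_succAbove_eq (x := i) (y := j) (fun h => hj s (by rw [hs, h]))
      exact ⟨some z, by rw [← hz]; rfl⟩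
  choose o ho using this
  refine ⟨⟨o, fun s t h h' => f.2 s t (by rw [← ho, ← ho, h]) ?_⟩, X_ext ho⟩
  rw [← ho]
  simpa using h'

lemma Small_zero {M : FIMod} (h : Small 0 M) : ∀ k (φ : M ⟶ Co (Xsh k) ℂ) S x, φ.app S x = 0 := by
  intro k
  induction k with
  | zero => exact fun φ => h 0 le_rfl φ fun S x f hf => (hf fun j => j.elim0).elim
  | succ k ih =>
    intro φ
    refine h (k + 1) (Nat.zero_le _) φ fun S x f hf => ?_
    obtain ⟨j, hj⟩ : ∃ j, ∀ s, f.1 s ≠ some j := by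
      by_contra hc; push Not at hc; exact hf hc
    obtain ⟨f', rfl⟩ := exists_up j f hj
    let φ' : M ⟶ Co (Xsh k) ℂ := toCo (fun S f => ev (Xsh (k + 1)) (up j f) ∘ₗ (φ.app S).hom)
      (fun i f x => ev_nat φ i (up j f) x)
    have := congrArg (ev (Xsh k) f') (ih φ' S x)
    rw [map_zero] at this
    exact this

lemma bdd_zero {E : FIMod} {N : ℕ} (h0 : ∀ S : FIObj, N ≤ Fintype.card S.α → ∀ x : E.obj S, x = 0)
    (k : ℕ) (φ : E ⟶ Co (Xsh k) ℂ) (S : FIObj) (x : E.obj S) : φ.app S x = 0 := by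
  refine Co_ext fun f => ?_
  obtain ⟨i, rfl⟩ := exists_hom f (le_max_right N (Fintype.card S.α))
  rw [← ev_nat φ, h0 _ ?_ (E.map i x), map_zero, map_zero, map_zero]
  have : Fintype.card (SS k (max N (Fintype.card S.α))).α = k + max N (Fintype.card S.α) := by
    change Fintype.card (Fin k ⊕ Fin _) = _
    simp
  rw [this]
  have := le_max_left N (Fintype.card S.α)
  omega

lemma main_ind (d : ℕ) : ∀ {M : FIMod} {D : ℕ}, FGd M D → Small d M → HasRes M := by
  induction d with
  | zero =>
    intro M D hM hS
    obtain ⟨N, hN⟩ := kernel_bdd hM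
    refine bdd_res N hM.1 fun S hS' x => ?_
    exact hN ⟨fun _ => ⊤, fun _ _ _ => trivial⟩ (fun φ S x _ => Small_zero hS D φ S x) S hS' x trivial
  | succ d ih =>
    intro M D hM hS
    choose P θ h1 h2 h3 h4 using exists_theta hM
    let T : FISub M :=
      { carrier := fun S => ⨅ k : Fin (d + 1), LinearMap.ker ((θ k).app S).hom
        map_mem := by
          intro S S' f x hx
          rw [Submodule.mem_iInf] at hx ⊢
          intro k
          have : (θ k).app S x = 0 := hx k
          change (θ k).app S' (M.map f x) = 0
          rw [nat, this, map_zero] }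
    have hT : ∀ S x, x ∈ T.carrier S ↔ ∀ k : Fin (d + 1), (θ k).app S x = 0 := by
      intro S x
      exact Submodule.mem_iInf _
    have hsm : Small 0 (sMod T) := by
      intro k _ φ hφ S x
      obtain ⟨ψ, hψ, rfl⟩ := Tot_ext (sIncl T) (sIncl_inj T) φ hφ
      change ψ.app S ((sIncl T).app S x) = 0
      by_cases hk : d + 1 ≤ k
      · exact hS k hk ψ hψ S _
      · exact h3 k S _ ((hT S _).1 (sIncl_mem T x) ⟨k, by omega⟩) ψ hψ
    obtain ⟨N, hN⟩ := kernel_bdd hM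
    have hTb := hN T fun φ S x hx => Small_zero hsm D (sIncl T ≫ φ) S (sElt T x hx)
    obtain ⟨E, a, e1, e2, e3, e4, -⟩ := bdd_embed (M := sMod T) (N := N)
      (fun S => by
        have := hM.1 S
        exact inferInstanceAs (Module.Finite ℂ (T.carrier S)))
      (fun S hS' x => sIncl_inj T S ((hTb S hS' _ (sIncl_mem T x)).trans (map_zero _).symm))
    obtain ⟨b, hb⟩ := e3 _ _ (sIncl T) (sIncl_inj T) a
    let F : Option (Fin (d + 1)) → FIMod := fun o => match o with
      | none => E
      | some k => P k
    let c : ∀ o, M ⟶ F o := fun o => match o with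
      | none => b
      | some k => θ k
    have hF : FGd (pMod F) (N + (d + 1)) := by
      refine FGd_pMod fun o => ?_
      rcases o with _ | k
      · exact FGd_mono (FGd_bdd e1 e2) (by omega)
      · exact FGd_mono (h1 k) (by omega)
    have hI : Inj (pMod F) := by
      refine Inj_pMod fun o => ?_
      rcases o with _ | k
      · exact e3
      · exact h2 k
    refine HasRes_step hF hI (pLift c) ?_ (ih (FGd_quot _ (qProj_surj _) hF) ?_)
    · intro S
      rw [← LinearMap.ker_eq_bot (f := ((pLift c).app S).hom), eq_bot_iff]
      intro x hx
      have hx' : ∀ o, (c o).app S x = 0 := fun o =>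
        (congrArg ((pProj F o).app S) (show (pLift c).app S x = 0 from hx)).trans (map_zero _)
      have hxT : x ∈ T.carrier S := (hT S x).2 fun k => hx' (some k)
      have h5 : a.app S (sElt T x hxT) = 0 := by
        rw [← hb]; exact hx' none
      have h6 : sElt T x hxT = 0 := e4 S (h5.trans (map_zero _).symm)
      exact congrArg ((sIncl T).app S) h6
    · intro k hk φ hφ
      let Ψ := qProj (rangeSub (pLift c)) ≫ φ
      have hΨ : Tot Ψ := fun S x f hf => hφ S _ f hf
      have hΨ0 : ∀ S x, Ψ.app S ((pLift c).app S x) = 0 := by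
        intro S x
        change φ.app S ((qProj (rangeSub (pLift c))).app S ((pLift c).app S x)) = 0
        rw [(qProj_eq_zero (rangeSub (pLift c)) S _).2 ⟨x, rfl⟩, map_zero]
      have hsum : ∀ S (y : (pMod F).obj S), Ψ.app S y =
          ∑ o, (pIncl F o ≫ Ψ).app S ((pProj F o).app S y) := by
        intro S y
        conv_lhs => rw [pIncl_sum F y, map_sum]
        rfl
      have hTot : ∀ o, Tot (pIncl F o ≫ Ψ) := fun o S x f hf => hΨ S _ f hf
      have hz : ∀ o, o ≠ some (Fin.last d) → ∀ S y, (pIncl F o ≫ Ψ).app S y = 0 := by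
        rintro (_ | j) hj
        · exact bdd_zero e2 k _
        · refine Small_of_FGd (h1 j) k ?_ _ (hTot _)
          have : j ≠ Fin.last d := fun h => hj (by rw [h])
          have := Fin.val_lt_last this
          omega
      have hz' : ∀ S y, (pIncl F (some (Fin.last d)) ≫ Ψ).app S y = 0 := by
        rcases hk.eq_or_lt with rfl | hk
        · refine h4 d _ (hTot (some (Fin.last d))) ?_
          intro S x
          have := hΨ0 S x
          rw [hsum, Finset.sum_eq_single (some (Fin.last d))] at this
          · exact this
          · intro o _ ho; exact hz o ho S _
          · simp
        · exact Small_of_FGd (h1 d) k hk _ (hTot (some (Fin.last d)))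
      intro S y
      obtain ⟨y, rfl⟩ := qProj_surj _ S y
      refine (hsum S y).trans (Finset.sum_eq_zero fun o _ => ?_)
      by_cases ho : o = some (Fin.last d)
      · subst ho; exact hz' S _
      · exact hz o ho S _

end FIR

/-- Every finitely generated FI-module admits a finite resolution
`0 → M → I^0 → ⋯ → I^n → 0` by finitely generated modules that are injective in the
category of finitely generated FI-modules (the modules beyond position n vanish). -/
theorem fg_FIMod_finite_injective_resolution (M : FIMod) (hM : FIMod.FG M) :
    ∃ (n : ℕ) (I : ℕ → FIMod) (ι : M ⟶ I 0) (d : ∀ j, I j ⟶ I (j + 1)),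
      (∀ j, FIMod.FG (I j)) ∧
      (∀ j, InjectiveInFG (I j)) ∧
      (∀ j, n < j → ∀ (S : FIObj) (x : (I j).obj S), x = 0) ∧
      (∀ S : FIObj, Function.Injective (ι.app S)) ∧
      (∀ S : FIObj, LinearMap.range (ι.app S).hom = LinearMap.ker ((d 0).app S).hom) ∧
      (∀ (j : ℕ) (S : FIObj),
        LinearMap.range ((d j).app S).hom = LinearMap.ker ((d (j + 1)).app S).hom) := by
  obtain ⟨D, hD⟩ := FIR.FGd_of_FG hM
  exact FIR.main_ind D hD (FIR.Small_of_FGd hD)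
end
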